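/- arXiv:2403.15844 — 2 statements merged into one kernel-verified Lean document; each statement's English description precedes it below -/
import Mathlib

section
/- Let A be a standard graded polynomial ring over an infinite field K and I a homogeneous almost complete intersection ideal generated by a homogeneous d-sequence f_1, ..., f_n of degrees d_1, ..., d_n such that f_1, ..., f_{n-1} is a regular sequence. Assume reg(A/I) < (∑_{l=1}^{n-1} d_l) − n + 1 and d_n = max{d_i}. Then for all s ≥ 2 and all i = 0, ..., n − 1, reg(A/(⟨f_1, ..., f_i⟩ + I^s)) = (∑_{l=1}^{n} d_l) − n + (s − 2)d_n. -/
open Ideal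

/-- A sequence `f 0, …, f (n-1)` is a *d-sequence* in `A` if
`(⟨f_0,…,f_{i-1}⟩ : f_i) ∩ ⟨f_0,…,f_{n-1}⟩ = ⟨f_0,…,f_{i-1}⟩` for every `i`. -/
def IsDSequence {A : Type*} [CommRing A] {n : ℕ} (f : Fin n → A) : Prop :=
  ∀ i : Fin n,
    (Ideal.span (f '' {j | j < i})).colon (Ideal.span {f i}) ⊓ Ideal.span (Set.range f)
      = Ideal.span (f '' {j | j < i})

/-- A (proper) regular sequence: each `f i` is a nonzerodivisor modulo the previous ones,
and the sequence generates a proper ideal. -/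
def IsRegSeq {A : Type*} [CommRing A] {n : ℕ} (f : Fin n → A) : Prop :=
  (∀ i : Fin n, ∀ a : A, a * f i ∈ Ideal.span (f '' {j | j < i}) →
      a ∈ Ideal.span (f '' {j | j < i}))
  ∧ Ideal.span (Set.range f) ≠ ⊤

/-- Extension of an `ℕ`-graded family of submodules to `ℤ` (zero in negative degrees). -/
def zg {K A : Type*} [Semiring K] [AddCommMonoid A] [Module K A]
    (𝒜 : ℕ → Submodule K A) : ℤ → Submodule K A :=
  fun z => if 0 ≤ z then 𝒜 z.toNat else ⊥

/-- The irrelevant (graded maximal) ideal of a graded algebra. -/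
def irrel {K A : Type*} [CommRing K] [CommRing A] [Algebra K A]
    (𝒜 : ℕ → Submodule K A) : Ideal A :=
  Ideal.span (⋃ n : ℕ, ((𝒜 (n + 1) : Submodule K A) : Set A))

/-- `𝒜` is a standard grading: `𝒜 0 = K·1`, the grading is generated in degree one,
and the degree-one part is finitely generated. -/
def IsStdGraded {K A : Type*} [CommSemiring K] [Semiring A] [Algebra K A]
    (𝒜 : ℕ → Submodule K A) : Prop :=
  𝒜 0 = 1 ∧ (∀ n : ℕ, 𝒜 (n + 1) = 𝒜 1 * 𝒜 n) ∧ (𝒜 1).FG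

/-- A minimal graded free resolution of the graded module `M` (graded pieces `ℳ`) over the
`γ`-graded ring `A` (graded pieces `𝒜`, graded maximal ideal `𝔪`):
free modules `ι i →₀ A` with generator degrees `σ i`, differentials `d`, augmentation `ε`,
which is exact, with graded differentials and augmentation, and minimal
(all differentials land in `𝔪 • F`). -/
structure MinGradedFreeRes (K : Type) [Field K] (A : Type) [CommRing A] [Algebra K A]
    {γ : Type} [AddCommGroup γ] (𝒜 : γ → Submodule K A) (𝔪 : Ideal A)
    (M : Type) [AddCommGroup M] [Module A M] [Module K M]
    (ℳ : γ → Submodule K M) where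
  ι : ℕ → Type
  fin : ∀ i, Finite (ι i)
  σ : ∀ i, ι i → γ
  d : ∀ i, (ι (i + 1) →₀ A) →ₗ[A] (ι i →₀ A)
  ε : (ι 0 →₀ A) →ₗ[A] M
  exact_d : ∀ i, Function.Exact (d (i + 1)) (d i)
  exact_ε : Function.Exact (d 0) ε
  surj : Function.Surjective ε
  graded_d : ∀ (i : ℕ) (j : γ) (f : ι (i + 1) →₀ A),
      (∀ k, f k ∈ 𝒜 (j - σ (i + 1) k)) → ∀ k, (d i f) k ∈ 𝒜 (j - σ i k)
  graded_ε : ∀ (j : γ) (f : ι 0 →₀ A),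
      (∀ k, f k ∈ 𝒜 (j - σ 0 k)) → ε f ∈ ℳ j
  minimal : ∀ (i : ℕ) (f : ι (i + 1) →₀ A), d i f ∈ 𝔪 • (⊤ : Submodule A (ι i →₀ A))

/-- Castelnuovo–Mumford regularity read off from a minimal graded free resolution:
`sup { (degree of a generator of F_i) - i }`. -/
noncomputable def MinGradedFreeRes.reg {K : Type} [Field K] {A : Type} [CommRing A]
    [Algebra K A] {𝒜 : ℤ → Submodule K A} {𝔪 : Ideal A} {M : Type} [AddCommGroup M]
    [Module A M] [Module K M] {ℳ : ℤ → Submodule K M}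
    (R : MinGradedFreeRes K A 𝒜 𝔪 M ℳ) : ℤ :=
  sSup {x : ℤ | ∃ (i : ℕ) (k : R.ι i), x = R.σ i k - (i : ℤ)}

/-- The graded pieces of a quotient module `A ⧸ J`. -/
def quotPieces {K A : Type*} [Field K] [CommRing A] [Algebra K A]
    (𝒜 : ℕ → Submodule K A) (J : Ideal A) : ℤ → Submodule K (A ⧸ J) :=
  fun j => (zg 𝒜 j).map ((J.mkQ).restrictScalars K)


/-- The height of an ideal: the infimum of the heights of primes containing it. -/
noncomputable def idealHeight {A : Type*} [CommRing A] (I : Ideal A) : ℕ∞ :=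
  ⨅ (p : PrimeSpectrum A) (_ : I ≤ p.asIdeal), Order.height p

/-- The minimal number of generators of an ideal. -/
noncomputable def minGens {A : Type*} [CommRing A] (I : Ideal A) : ℕ :=
  sInf {k : ℕ | ∃ g : Fin k → A, I = Ideal.span (Set.range g)}

/-- An ideal is a complete intersection if it is generated by a regular sequence. -/
def IsCompleteIntersectionIdeal {R : Type*} [CommRing R] (Q : Ideal R) : Prop :=
  ∃ (k : ℕ) (g : Fin k → R), Q = Ideal.span (Set.range g) ∧ IsRegSeq g

/-- `I` is an almost complete intersection: `μ(I) = ht(I) + 1` and `I` is locally a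
complete intersection at each of its minimal primes. -/
def IsACI {A : Type*} [CommRing A] (I : Ideal A) : Prop :=
  (minGens I : ℕ∞) = idealHeight I + 1 ∧
  ∀ p ∈ I.minimalPrimes, ∀ h : p.IsPrime,
    letI := h
    IsCompleteIntersectionIdeal (I.map (algebraMap A (Localization.AtPrime p)))



namespace RPA

open MvPolynomial

/-- bigraded differential module over the polynomial ring -/
structure DM (m : ℕ) (K : Type) [Field K] where
  C : Type
  [ag : AddCommGroup C]
  [md : Module (MvPolynomial (Fin m) K) C]
  d : C →ₗ[MvPolynomial (Fin m) K] C
  dd : ∀ c, d (d c) = 0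
  H : ℤ → ℤ → AddSubgroup C
  dH : ∀ i j c, c ∈ H i j → d c ∈ H (i - 1) j
  xH : ∀ (t : Fin m) i j c, c ∈ H i j → (X t : MvPolynomial (Fin m) K) • c ∈ H i (j + 1)

attribute [instance] DM.ag DM.md

/-- graded module -/
structure GM (m : ℕ) (K : Type) [Field K] where
  M : Type
  [ag : AddCommGroup M]
  [md : Module (MvPolynomial (Fin m) K) M]
  G : ℤ → AddSubgroup M
  xG : ∀ (t : Fin m) j c, c ∈ G j → (X t : MvPolynomial (Fin m) K) • c ∈ G (j + 1)

attribute [instance] GM.ag GM.md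

variable {m : ℕ} {K : Type} [Field K]

/-- cone of multiplication by a variable -/
noncomputable def cone (t : Fin m) (D : DM m K) : DM m K where
  C := D.C × D.C
  d := (D.d.comp (LinearMap.fst _ _ _) + (X t : MvPolynomial (Fin m) K) • LinearMap.snd _ _ _).prod
        (-(D.d.comp (LinearMap.snd _ _ _)))
  dd := by
    rintro ⟨a, b⟩
    simp [D.dd]
  H := fun i j => (D.H i j).prod (D.H (i - 1) (j - 1))
  dH := by
    rintro i j ⟨a, b⟩ ⟨ha, hb⟩
    refine ⟨?_, ?_⟩
    · have := D.xH t _ _ _ hb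
      simp only [sub_add_cancel] at this
      exact add_mem (D.dH _ _ _ ha) this
    · exact (D.H (i - 1 - 1) (j - 1)).neg_mem (D.dH _ _ _ hb)
  xH := by
    rintro u i j ⟨a, b⟩ ⟨ha, hb⟩
    refine ⟨D.xH u _ _ _ ha, ?_⟩
    have := D.xH u _ _ _ hb
    have e : j - 1 + 1 = j + 1 - 1 := by ring
    rw [e] at this
    exact this

theorem cone_d (t : Fin m) (D : DM m K) (a b : D.C) :
    (cone t D).d (a, b) = (D.d a + (X t : MvPolynomial (Fin m) K) • b, - D.d b) := rfl

theorem cone_H (t : Fin m) (D : DM m K) (i j : ℤ) (a b : D.C) :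
    ((a, b) : D.C × D.C) ∈ (cone t D).H i j ↔ a ∈ D.H i j ∧ b ∈ D.H (i - 1) (j - 1) := Iff.rfl

/-- module in homological degree zero -/
noncomputable def ofMod (N : GM m K) : DM m K where
  C := N.M
  d := 0
  dd := by simp
  H := fun i j => if i = 0 then N.G j else ⊥
  dH := by intro i j c _; simp
  xH := by
    intro t i j c hc
    split_ifs at hc ⊢ with h
    · exact N.xG _ _ _ hc
    · simp only [AddSubgroup.mem_bot] at hc ⊢
      simp [hc]

/-- Koszul object -/
noncomputable def kosL (N : GM m K) : List (Fin m) → DM m K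
  | [] => ofMod N
  | t :: l => cone t (kosL N l)

/-- vanishing of homology -/
def VD (D : DM m K) (i j : ℤ) : Prop :=
  ∀ z ∈ D.H i j, D.d z = 0 → ∃ w ∈ D.H (i + 1) j, D.d w = z

/-- short exact sequences -/
structure SES {L M N : DM m K} (φ : L.C →ₗ[MvPolynomial (Fin m) K] M.C)
    (ψ : M.C →ₗ[MvPolynomial (Fin m) K] N.C) : Prop where
  φd : ∀ c, φ (L.d c) = M.d (φ c)
  ψd : ∀ c, ψ (M.d c) = N.d (ψ c)
  inj : Function.Injective φ
  φH : ∀ i j c, c ∈ L.H i j → φ c ∈ M.H i j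
  ψH : ∀ i j c, c ∈ M.H i j → ψ c ∈ N.H i j
  zero : ∀ c, ψ (φ c) = 0
  surj : ∀ i j c, c ∈ N.H i j → ∃ b ∈ M.H i j, ψ b = c
  ex : ∀ i j c, c ∈ M.H i j → ψ c = 0 → ∃ a ∈ L.H i j, φ a = c

structure GSES {L M N : GM m K} (φ : L.M →ₗ[MvPolynomial (Fin m) K] M.M)
    (ψ : M.M →ₗ[MvPolynomial (Fin m) K] N.M) : Prop where
  inj : Function.Injective φ
  φH : ∀ j c, c ∈ L.G j → φ c ∈ M.G j
  ψH : ∀ j c, c ∈ M.G j → ψ c ∈ N.G j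
  zero : ∀ c, ψ (φ c) = 0
  surj : ∀ j c, c ∈ N.G j → ∃ b ∈ M.G j, ψ b = c
  ex : ∀ j c, c ∈ M.G j → ψ c = 0 → ∃ a ∈ L.G j, φ a = c

theorem SES.cone {L M N : DM m K} {φ : L.C →ₗ[MvPolynomial (Fin m) K] M.C}
    {ψ : M.C →ₗ[MvPolynomial (Fin m) K] N.C} (h : SES φ ψ) (t : Fin m) :
    SES (L := cone t L) (M := cone t M) (N := cone t N) (φ.prodMap φ) (ψ.prodMap ψ) where
  φd := by
    rintro ⟨a, b⟩
    rw [cone_d]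
    change (φ _, φ _) = (M.d (φ a) + (X t : MvPolynomial (Fin m) K) • (φ b), - M.d (φ b))
    simp [h.φd]
  ψd := by
    rintro ⟨a, b⟩
    rw [cone_d]
    change (ψ _, ψ _) = (N.d (ψ a) + (X t : MvPolynomial (Fin m) K) • (ψ b), - N.d (ψ b))
    simp [h.ψd]
  inj := by
    rintro ⟨a, b⟩ ⟨a', b'⟩ hab
    have h1 : φ a = φ a' := congrArg Prod.fst hab
    have h2 : φ b = φ b' := congrArg Prod.snd hab
    exact Prod.ext (h.inj h1) (h.inj h2)
  φH := by
    rintro i j ⟨a, b⟩ ⟨ha, hb⟩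
    exact ⟨h.φH _ _ _ ha, h.φH _ _ _ hb⟩
  ψH := by
    rintro i j ⟨a, b⟩ ⟨ha, hb⟩
    exact ⟨h.ψH _ _ _ ha, h.ψH _ _ _ hb⟩
  zero := by
    rintro ⟨a, b⟩
    exact Prod.ext (h.zero a) (h.zero b)
  surj := by
    rintro i j ⟨a, b⟩ ⟨ha, hb⟩
    obtain ⟨a', ha', ea⟩ := h.surj _ _ _ ha
    obtain ⟨b', hb', eb⟩ := h.surj _ _ _ hb
    exact ⟨(a', b'), ⟨ha', hb'⟩, Prod.ext ea eb⟩
  ex := by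
    rintro i j ⟨a, b⟩ ⟨ha, hb⟩ hab
    have h1 : ψ a = 0 := congrArg Prod.fst hab
    have h2 : ψ b = 0 := congrArg Prod.snd hab
    obtain ⟨a', ha', ea⟩ := h.ex _ _ _ ha h1
    obtain ⟨b', hb', eb⟩ := h.ex _ _ _ hb h2
    exact ⟨(a', b'), ⟨ha', hb'⟩, Prod.ext ea eb⟩

theorem GSES.ofMod {L M N : GM m K} {φ : L.M →ₗ[MvPolynomial (Fin m) K] M.M}
    {ψ : M.M →ₗ[MvPolynomial (Fin m) K] N.M} (h : GSES φ ψ) :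
    SES (L := ofMod L) (M := ofMod M) (N := ofMod N) φ ψ where
  φd := fun c => map_zero φ
  ψd := fun c => map_zero ψ
  inj := h.inj
  φH := by
    intro i j c hc
    by_cases hi : i = 0
    · simp only [RPA.ofMod, hi, if_true] at hc ⊢
      exact h.φH _ _ hc
    · simp only [RPA.ofMod, hi, if_false] at hc ⊢
      rw [hc]; exact map_zero φ
  ψH := by
    intro i j c hc
    by_cases hi : i = 0
    · simp only [RPA.ofMod, hi, if_true] at hc ⊢
      exact h.ψH _ _ hc
    · simp only [RPA.ofMod, hi, if_false] at hc ⊢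
      rw [hc]; exact map_zero ψ
  zero := h.zero
  surj := by
    intro i j c hc
    by_cases hi : i = 0
    · simp only [RPA.ofMod, hi, if_true] at hc ⊢
      exact h.surj _ _ hc
    · simp only [RPA.ofMod, hi, if_false] at hc ⊢
      exact ⟨0, rfl, by rw [hc]; exact map_zero ψ⟩
  ex := by
    intro i j c hc
    by_cases hi : i = 0
    · simp only [RPA.ofMod, hi, if_true] at hc ⊢
      exact h.ex _ _ hc
    · simp only [RPA.ofMod, hi, if_false] at hc ⊢
      intro _
      exact ⟨0, rfl, by rw [hc]; exact map_zero φ⟩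

theorem GSES.kosL {L M N : GM m K} {φ : L.M →ₗ[MvPolynomial (Fin m) K] M.M}
    {ψ : M.M →ₗ[MvPolynomial (Fin m) K] N.M} (h : GSES φ ψ) (l : List (Fin m)) :
    ∃ (φ' : (kosL L l).C →ₗ[MvPolynomial (Fin m) K] (kosL M l).C)
      (ψ' : (kosL M l).C →ₗ[MvPolynomial (Fin m) K] (kosL N l).C), SES φ' ψ' := by
  induction l with
  | nil => exact ⟨φ, ψ, h.ofMod⟩
  | cons t l ih =>
    obtain ⟨φ', ψ', h'⟩ := ih
    exact ⟨_, _, h'.cone t⟩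

section LES
variable {L M N : DM m K} {φ : L.C →ₗ[MvPolynomial (Fin m) K] M.C}
    {ψ : M.C →ₗ[MvPolynomial (Fin m) K] N.C}

theorem SES.midV (h : SES φ ψ) {i j : ℤ} (hL : VD L i j) (hN : VD N i j) : VD M i j := by
  intro z hz hdz
  obtain ⟨w, hw, ew⟩ := hN (ψ z) (h.ψH _ _ _ hz) (by rw [← h.ψd, hdz, map_zero])
  obtain ⟨v, hv, ev⟩ := h.surj _ _ _ hw
  have h1 : z - M.d v ∈ M.H i j := by
    have := M.dH _ _ _ hv
    rw [add_sub_cancel_right] at this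
    exact sub_mem hz this
  obtain ⟨a, ha, ea⟩ := h.ex _ _ _ h1 (by rw [map_sub, h.ψd, ev, ew, sub_self])
  obtain ⟨u, hu, eu⟩ := hL a ha (h.inj (by rw [h.φd, ea, map_sub, hdz, M.dd, map_zero, sub_zero]))
  refine ⟨φ u + v, add_mem (h.φH _ _ _ hu) hv, ?_⟩
  rw [map_add, ← h.φd, eu, ea]; abel

theorem SES.rightV (h : SES φ ψ) {i j : ℤ} (hL : VD L (i - 1) j) (hM : VD M i j) : VD N i j := by
  intro z hz hdz
  obtain ⟨y, hy, ey⟩ := h.surj _ _ _ hz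
  obtain ⟨a, ha, ea⟩ := h.ex _ _ _ (M.dH _ _ _ hy) (by rw [h.ψd, ey, hdz])
  obtain ⟨u, hu, eu⟩ := hL a ha (h.inj (by rw [h.φd, ea, M.dd, map_zero]))
  rw [sub_add_cancel] at hu
  obtain ⟨v, hv, ev⟩ := hM (y - φ u) (sub_mem hy (h.φH _ _ _ hu))
    (by rw [map_sub, ← h.φd, eu, ea, sub_self])
  refine ⟨ψ v, h.ψH _ _ _ hv, ?_⟩
  rw [← h.ψd, ev, map_sub, h.zero, sub_zero, ey]

theorem SES.leftV' (h : SES φ ψ) {i j : ℤ} (hN : VD N (i + 1) j)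
    (hM : ∀ z ∈ L.H i j, L.d z = 0 → ∃ w ∈ M.H (i + 1) j, M.d w = φ z) : VD L i j := by
  intro z hz hdz
  obtain ⟨w, hw, ew⟩ := hM z hz hdz
  obtain ⟨u, hu, eu⟩ := hN (ψ w) (h.ψH _ _ _ hw) (by rw [← h.ψd, ew, h.zero])
  obtain ⟨v, hv, ev⟩ := h.surj _ _ _ hu
  have h1 : w - M.d v ∈ M.H (i + 1) j := by
    have := M.dH _ _ _ hv
    rw [add_sub_cancel_right] at this
    exact sub_mem hw this
  obtain ⟨a, ha, ea⟩ := h.ex _ _ _ h1 (by rw [map_sub, h.ψd, ev, eu, sub_self])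
  exact ⟨a, ha, h.inj (by rw [h.φd, ea, map_sub, ew, M.dd, sub_zero])⟩

theorem SES.leftV (h : SES φ ψ) {i j : ℤ} (hN : VD N (i + 1) j) (hM : VD M i j) : VD L i j :=
  h.leftV' hN fun z hz hdz => hM (φ z) (h.φH _ _ _ hz) (by rw [← h.φd, hdz, map_zero])

end LES

/-- vanishing of Koszul homology of a graded module -/
def V (N : GM m K) (i j : ℤ) : Prop := VD (kosL N (List.finRange m)) i j

def regLE (N : GM m K) (c : ℤ) : Prop := ∀ i j, c < j - i → V N i j
def regEq (N : GM m K) (c : ℤ) : Prop := regLE N c ∧ ∃ i, ¬ V N i (c + i)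

theorem kosL_H_neg (N : GM m K) (l : List (Fin m)) : ∀ i j c, i < 0 → c ∈ (kosL N l).H i j → c = 0 := by
  induction l with
  | nil =>
    intro i j c hi hc
    simp only [kosL, ofMod, hi.ne, if_false] at hc
    exact hc
  | cons t l ih =>
    rintro i j ⟨a, b⟩ hi ⟨ha, hb⟩
    exact Prod.ext (ih _ _ _ hi ha) (ih _ _ _ (by omega) hb)

theorem kosL_H_big (N : GM m K) (l : List (Fin m)) :
    ∀ i j c, (l.length : ℤ) < i → c ∈ (kosL N l).H i j → c = 0 := by
  induction l with
  | nil =>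
    intro i j c hi hc
    have : i ≠ 0 := by simp at hi; omega
    simp only [kosL, ofMod, this, if_false] at hc
    exact hc
  | cons t l ih =>
    rintro i j ⟨a, b⟩ hi ⟨ha, hb⟩
    simp only [List.length_cons, Nat.cast_add, Nat.cast_one] at hi
    exact Prod.ext (ih _ _ _ (by omega) ha) (ih _ _ _ (by omega) hb)

theorem V_neg (N : GM m K) {i : ℤ} (j : ℤ) (hi : i < 0) : V N i j := fun z hz _ =>
  ⟨0, zero_mem _, by rw [map_zero, kosL_H_neg N _ _ _ _ hi hz]⟩

theorem V_big (N : GM m K) {i : ℤ} (j : ℤ) (hi : (m : ℤ) < i) : V N i j := fun z hz _ =>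
  ⟨0, zero_mem _, by rw [map_zero, kosL_H_big N _ _ _ _ (by simpa using hi) hz]⟩

theorem kosL_subsingleton (N : GM m K) [h : Subsingleton N.M] (l : List (Fin m)) :
    Subsingleton (kosL N l).C := by
  induction l with
  | nil => exact h
  | cons t l ih => exact inferInstanceAs (Subsingleton ((kosL N l).C × (kosL N l).C))

theorem V_subsingleton (N : GM m K) [h : Subsingleton N.M] (i j : ℤ) : V N i j := fun z _ _ =>
  ⟨0, zero_mem _, (kosL_subsingleton N _).elim _ _⟩

/-- shift -/
noncomputable def shift (e : ℤ) (N : GM m K) : GM m K where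
  M := N.M
  G := fun j => N.G (j - e)
  xG := by
    intro t j c hc
    have := N.xG t _ _ hc
    rwa [show j - e + 1 = j + 1 - e by ring] at this

theorem kosL_shift (e : ℤ) (N : GM m K) (l : List (Fin m)) :
    ∃ ψ : (kosL (shift e N) l).C ≃ (kosL N l).C,
      ψ 0 = 0 ∧ (∀ a b, ψ (a + b) = ψ a + ψ b) ∧
      (∀ t : Fin m, ∀ a, ψ ((X t : MvPolynomial (Fin m) K) • a) = (X t : MvPolynomial (Fin m) K) • ψ a) ∧
      (∀ c, ψ ((kosL (shift e N) l).d c) = (kosL N l).d (ψ c)) ∧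
      (∀ i j c, c ∈ (kosL (shift e N) l).H i j ↔ ψ c ∈ (kosL N l).H i (j - e)) := by
  induction l with
  | nil =>
    refine ⟨Equiv.refl N.M, rfl, fun _ _ => rfl, fun _ _ => rfl, fun _ => rfl, ?_⟩
    intro i j c
    by_cases hi : i = 0
    · simp only [kosL, ofMod, hi, if_true]; rfl
    · simp only [kosL, ofMod, hi, if_false]; rfl
  | cons t l ih =>
    obtain ⟨ψ, h0, ha, hx, hd, hH⟩ := ih
    have hneg : ∀ a, ψ (-a) = - ψ a := by
      intro a
      have := ha (-a) a
      rw [neg_add_cancel, h0] at this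
      exact eq_neg_of_add_eq_zero_left this.symm
    refine ⟨Equiv.prodCongr ψ ψ, Prod.ext h0 h0, ?_, ?_, ?_, ?_⟩
    · rintro ⟨a, b⟩ ⟨a', b'⟩; exact Prod.ext (ha _ _) (ha _ _)
    · rintro u ⟨a, b⟩; exact Prod.ext (hx _ _) (hx _ _)
    · rintro ⟨a, b⟩
      refine Prod.ext ?_ ?_
      · change ψ (_ + _) = (kosL N l).d (ψ a) + (X t : MvPolynomial (Fin m) K) • ψ b
        rw [ha]; exact congrArg₂ (· + ·) (hd _) (hx _ _)
      · change ψ (-_) = -(kosL N l).d (ψ b)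
        rw [hneg]; exact congrArg Neg.neg (hd _)
    · rintro i j ⟨a, b⟩
      refine and_congr (hH _ _ _) ?_
      refine (hH _ _ _).trans ?_
      rw [show j - 1 - e = j - e - 1 by ring]; rfl

theorem V_shift (e : ℤ) (N : GM m K) (i j : ℤ) : V (shift e N) i j ↔ V N i (j - e) := by
  obtain ⟨ψ, h0, -, -, hd, hH⟩ := kosL_shift e N (List.finRange m)
  constructor
  · intro h z hz hdz
    obtain ⟨w, hw, ew⟩ := h (ψ.symm z) ((hH _ _ _).2 (by simpa using hz))
      (ψ.injective (by rw [hd, h0]; simpa using hdz))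
    exact ⟨ψ w, (hH _ _ _).1 hw, by rw [← hd, ew]; simp⟩
  · intro h z hz hdz
    obtain ⟨w, hw, ew⟩ := h (ψ z) ((hH _ _ _).1 hz) (by rw [← hd, hdz, h0])
    refine ⟨ψ.symm w, (hH _ _ _).2 (by simpa using hw), ψ.injective (by rw [hd]; simpa using ew)⟩

theorem regLE_shift {e : ℤ} {N : GM m K} {c : ℤ} : regLE (shift e N) c ↔ regLE N (c - e) := by
  constructor
  · intro h i j hij
    have := (V_shift e N i (j + e)).1 (h i (j + e) (by linarith))
    simpa using this
  · intro h i j hij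
    exact (V_shift e N i j).2 (h _ _ (by linarith))

theorem regEq_shift {e : ℤ} {N : GM m K} {c : ℤ} : regEq (shift e N) c ↔ regEq N (c - e) := by
  refine and_congr regLE_shift (exists_congr fun i => ?_)
  rw [V_shift, show c + i - e = c - e + i by ring]

section
variable {L M N : GM m K} {φ : L.M →ₗ[MvPolynomial (Fin m) K] M.M}
    {ψ : M.M →ₗ[MvPolynomial (Fin m) K] N.M}

theorem regE1 (h : GSES φ ψ) {c : ℤ} (hM : regEq M c) (hN : regLE N (c - 1)) : regEq L c := by
  obtain ⟨φ', ψ', h'⟩ := h.kosL (List.finRange m)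
  obtain ⟨hM, i, hi⟩ := hM
  refine ⟨fun i j hij => h'.leftV (hN _ _ (by linarith)) (hM _ _ hij), i, fun hL => hi ?_⟩
  exact h'.midV hL (hN _ _ (by linarith))

theorem regE2 (h : GSES φ ψ) {c : ℤ} (hL : regEq L (c + 1)) (hM : regLE M c) : regEq N c := by
  obtain ⟨φ', ψ', h'⟩ := h.kosL (List.finRange m)
  obtain ⟨hL, i, hi⟩ := hL
  refine ⟨fun i j hij => h'.rightV (hL _ _ (by linarith)) (hM _ _ hij), i + 1, fun hN => hi ?_⟩
  rw [show c + (i + 1) = c + 1 + i by ring] at hN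
  exact h'.leftV hN (hM _ _ (by linarith))

theorem regE3 (h : GSES φ ψ) {c : ℤ} (hN : regEq N c) (hL : regLE L c) : regEq M c := by
  obtain ⟨φ', ψ', h'⟩ := h.kosL (List.finRange m)
  obtain ⟨hN, i, hi⟩ := hN
  refine ⟨fun i j hij => h'.midV (hL _ _ hij) (hN _ _ hij), i, fun hM => hi ?_⟩
  exact h'.rightV (hL _ _ (by linarith)) hM
end



noncomputable def emb (N : GM m K) : ∀ l : List (Fin m), N.M →ₗ[MvPolynomial (Fin m) K] (kosL N l).C
  | [] => LinearMap.id
  | _ :: l => (LinearMap.inl (MvPolynomial (Fin m) K) (kosL N l).C (kosL N l).C).comp (emb N l)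

def Qm (N : GM m K) : List (Fin m) → ℤ → N.M → Prop
  | [], _, b => b = 0
  | t :: l, j, b => ∃ c ∈ N.G (j - 1), Qm N l j (b - (X t : MvPolynomial (Fin m) K) • c)

theorem emb_cons (N : GM m K) (t : Fin m) (l : List (Fin m)) (b : N.M) :
    emb N (t :: l) b = ((emb N l b, 0) : (kosL N l).C × (kosL N l).C) := rfl

theorem emb_d (N : GM m K) (l : List (Fin m)) (b : N.M) : (kosL N l).d (emb N l b) = 0 := by
  induction l with
  | nil => rfl
  | cons t l ih =>
    rw [emb_cons]
    refine (cone_d t (kosL N l) (emb N l b) 0).trans ?_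
    rw [ih, map_zero, smul_zero, neg_zero, add_zero]; rfl

theorem emb_inj (N : GM m K) (l : List (Fin m)) : Function.Injective (emb N l) := by
  induction l with
  | nil => exact fun _ _ h => h
  | cons t l ih =>
    intro a b h
    rw [emb_cons, emb_cons] at h
    exact ih (congrArg Prod.fst h)

theorem emb_H (N : GM m K) (l : List (Fin m)) (j : ℤ) (c : (kosL N l).C) :
    c ∈ (kosL N l).H 0 j ↔ ∃ b ∈ N.G j, emb N l b = c := by
  induction l with
  | nil =>
    constructor
    · intro h
      exact ⟨c, h, rfl⟩
    · rintro ⟨b, hb, rfl⟩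
      exact hb
  | cons t l ih =>
    obtain ⟨a, b⟩ := c
    constructor
    · rintro ⟨ha, hb⟩
      obtain ⟨a', ha', e⟩ := (ih a).1 ha
      refine ⟨a', ha', ?_⟩
      rw [emb_cons]
      exact Prod.ext e (kosL_H_neg N l _ _ _ (by norm_num) hb).symm
    · rintro ⟨b', hb', e⟩
      rw [emb_cons] at e
      have h1 : emb N l b' = a := congrArg Prod.fst e
      have h2 : 0 = b := congrArg Prod.snd e
      exact ⟨(ih a).2 ⟨b', hb', h1⟩, by rw [← h2]; exact zero_mem _⟩

theorem Qm_iff (N : GM m K) (l : List (Fin m)) (j : ℤ) (b : N.M) :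
    (∃ w ∈ (kosL N l).H 1 j, (kosL N l).d w = emb N l b) ↔ Qm N l j b := by
  induction l generalizing b with
  | nil =>
    constructor
    · rintro ⟨w, -, hw⟩
      exact hw.symm
    · intro h
      exact ⟨0, zero_mem _, by rw [map_zero]; exact h.symm⟩
  | cons t l ih =>
    constructor
    · rintro ⟨⟨a, c⟩, ⟨ha, hc⟩, e⟩
      rw [emb_cons] at e
      have e1 : (kosL N l).d a + (X t : MvPolynomial (Fin m) K) • c = emb N l b := congrArg Prod.fst e
      obtain ⟨c', hc', rfl⟩ := (emb_H N l _ c).1 hc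
      refine ⟨c', hc', (ih _).1 ⟨a, ha, ?_⟩⟩
      rw [map_sub, map_smul, ← e1, add_sub_cancel_right]
    · rintro ⟨c, hc, h⟩
      obtain ⟨a, ha, e⟩ := (ih _).2 h
      refine ⟨((a, emb N l c) : (kosL N l).C × (kosL N l).C), ⟨ha, (emb_H N l _ _).2 ⟨c, hc, rfl⟩⟩, ?_⟩
      refine (cone_d t (kosL N l) a (emb N l c)).trans ?_
      rw [emb_cons, e, emb_d, map_sub, map_smul, sub_add_cancel, neg_zero]

theorem V_zero_iff (N : GM m K) (j : ℤ) :
    V N 0 j ↔ ∀ b ∈ N.G j, Qm N (List.finRange m) j b := by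
  constructor
  · intro h b hb
    exact (Qm_iff N _ j b).1 (h _ ((emb_H N _ _ _).2 ⟨b, hb, rfl⟩) (emb_d N _ b))
  · intro h z hz _
    obtain ⟨b, hb, rfl⟩ := (emb_H N _ _ _).1 hz
    exact (Qm_iff N _ j b).2 (h b hb)

theorem acyclic (N : GM m K)
    (hreg : ∀ (t : Fin m) (l : List (Fin m)) (j : ℤ) (b : N.M), (t :: l).Nodup → b ∈ N.G j →
      Qm N l (j + 1) ((X t : MvPolynomial (Fin m) K) • b) → Qm N l j b)
    (l : List (Fin m)) (hl : l.Nodup) : ∀ i j : ℤ, 1 ≤ i → VD (kosL N l) i j := by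
  induction l with
  | nil =>
    intro i j hi z hz _
    have : i ≠ 0 := by omega
    simp only [kosL, ofMod, this, if_false] at hz
    exact ⟨0, zero_mem _, hz.symm⟩
  | cons t l ih =>
    have ih := ih (List.nodup_cons.1 hl).2
    rintro i j hi ⟨a, b⟩ ⟨ha, hb⟩ hd
    have e1 : (kosL N l).d a + (X t : MvPolynomial (Fin m) K) • b = 0 := congrArg Prod.fst hd
    have e2 : - (kosL N l).d b = 0 := congrArg Prod.snd hd
    rw [neg_eq_zero] at e2
    have key : ∃ v ∈ (kosL N l).H i (j - 1), (kosL N l).d v = b := by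
      rcases eq_or_lt_of_le hi with rfl | hi'
      · obtain ⟨b', hb', rfl⟩ := (emb_H N l _ b).1 hb
        refine (Qm_iff N l _ _).2 (hreg t l _ _ hl hb' ((Qm_iff N l _ _).1 ⟨-a, ?_, ?_⟩))
        · rw [sub_add_cancel]; exact neg_mem ha
        · rw [map_neg, map_smul]; exact (eq_neg_of_add_eq_zero_right e1).symm
      · obtain ⟨v, hv, e⟩ := ih (i - 1) (j - 1) (by omega) b hb e2
        rw [sub_add_cancel] at hv
        exact ⟨v, hv, e⟩
    obtain ⟨v, hv, ev⟩ := key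
    obtain ⟨u, hu, eu⟩ := ih i j hi (a + (X t : MvPolynomial (Fin m) K) • v)
      (by
        have := (kosL N l).xH t _ _ _ hv
        rw [sub_add_cancel] at this
        exact add_mem ha this)
      (by rw [map_add, map_smul, ev, e1])
    refine ⟨((u, -v) : (kosL N l).C × (kosL N l).C), ⟨hu, ?_⟩, ?_⟩
    · rw [add_sub_cancel_right]; exact AddSubgroup.neg_mem _ hv
    · refine (cone_d t (kosL N l) u (-v)).trans ?_
      rw [eu, map_neg, ev, neg_neg, smul_neg, add_neg_cancel_right]

noncomputable abbrev zh (m : ℕ) (K : Type) [Field K] : ℤ → Submodule K (MvPolynomial (Fin m) K) :=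
  zg (homogeneousSubmodule (Fin m) K)

theorem mem_zh {z : ℤ} {a : MvPolynomial (Fin m) K} :
    a ∈ zh m K z ↔ ∀ e, coeff e a ≠ 0 → (e.degree : ℤ) = z := by
  unfold zh zg
  split_ifs with h
  · rw [mem_homogeneousSubmodule]
    constructor
    · intro ha e he
      have h1 : (Finsupp.weight (fun _ => 1)) e = z.toNat := ha he
      rw [← Finsupp.degree_eq_weight_one] at h1
      omega
    · intro ha e he
      have h1 := ha e he
      change (Finsupp.weight (fun _ => 1)) e = z.toNat
      rw [← Finsupp.degree_eq_weight_one]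
      omega
  · rw [Submodule.mem_bot]
    constructor
    · rintro rfl e he; simp at he
    · intro ha
      ext e
      by_contra he
      have := ha e he
      omega

theorem mul_zh {y z : ℤ} {a b : MvPolynomial (Fin m) K} (ha : a ∈ zh m K y) (hb : b ∈ zh m K z) :
    a * b ∈ zh m K (y + z) := by
  classical
  rw [mem_zh] at *
  intro e he
  rw [coeff_mul] at he
  obtain ⟨⟨p, q⟩, hp, hpq⟩ := Finset.exists_ne_zero_of_sum_ne_zero he
  rw [Finset.HasAntidiagonal.mem_antidiagonal] at hp
  simp only at hp hpq
  rw [← hp, map_add, Nat.cast_add, ha p (left_ne_zero_of_mul hpq), hb q (right_ne_zero_of_mul hpq)]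

theorem X_zh (t : Fin m) : (X t : MvPolynomial (Fin m) K) ∈ zh m K 1 := by
  classical
  rw [mem_zh]
  intro e he
  rw [coeff_X] at he
  have : Finsupp.single t 1 = e := by by_contra h; simp [h] at he
  rw [← this]; simp

/-- graded free module -/
noncomputable def fr {ι : Type} (σ : ι → ℤ) : GM m K where
  M := ι →₀ MvPolynomial (Fin m) K
  G := fun j =>
    { carrier := {f | ∀ k, f k ∈ zh m K (j - σ k)}
      add_mem' := fun ha hb k => add_mem (ha k) (hb k)
      zero_mem' := fun _ => zero_mem _
      neg_mem' := fun ha k => neg_mem (ha k) }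
  xG := by
    intro t j c hc k
    have := mul_zh (X_zh t) (hc k)
    rw [show 1 + (j - σ k) = j + 1 - σ k by ring] at this
    exact this

theorem mem_fr {ι : Type} {σ : ι → ℤ} {j : ℤ} {f : ι →₀ MvPolynomial (Fin m) K} :
    f ∈ (fr σ : GM m K).G j ↔ ∀ k, f k ∈ zh m K (j - σ k) := Iff.rfl

theorem Qm_fr {ι : Type} (σ : ι → ℤ) (l : List (Fin m)) (j : ℤ) (f : ι →₀ MvPolynomial (Fin m) K)
    (hf : f ∈ (fr σ : GM m K).G j) :
    Qm (fr σ : GM m K) l j f ↔ ∀ k e, coeff e (f k) ≠ 0 → ∃ t ∈ l, e t ≠ 0 := by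
  classical
  induction l generalizing f with
  | nil =>
    constructor
    · rintro h k e he
      change f = 0 at h
      simp [h] at he
    · intro h
      change f = 0
      ext k e
      by_contra he
      obtain ⟨t, ht, _⟩ := h k e he
      simp at ht
  | cons t l ih =>
    have key : ∀ c : ι →₀ MvPolynomial (Fin m) K, c ∈ (fr σ : GM m K).G (j - 1) →
        (f - (X t : MvPolynomial (Fin m) K) • c : ι →₀ MvPolynomial (Fin m) K) ∈ (fr σ : GM m K).G j := by
      intro c hc
      have := (fr σ : GM m K).xG t _ _ hc
      rw [sub_add_cancel] at this
      exact sub_mem hf this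
    constructor
    · rintro ⟨(c : ι →₀ MvPolynomial (Fin m) K), hc, h⟩ k e he
      have h' := (ih _ (key c hc)).1 h k e
      by_cases h0 : coeff e ((f - (X t : MvPolynomial (Fin m) K) • c) k) = 0
      · refine ⟨t, List.mem_cons_self, ?_⟩
        intro het
        rw [Finsupp.sub_apply, Finsupp.smul_apply, smul_eq_mul, coeff_sub, coeff_X_mul'] at h0
        simp [het] at h0
        exact he h0
      · obtain ⟨u, hu, hu'⟩ := h' h0
        exact ⟨u, List.mem_cons_of_mem _ hu, hu'⟩
    · intro h
      let c : ι →₀ MvPolynomial (Fin m) K :=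
        f.mapRange (fun a => a.divMonomial (Finsupp.single t 1)) (zero_divMonomial _)
      have hc : c ∈ (fr σ : GM m K).G (j - 1) := by
        intro k
        rw [mem_zh]
        intro e he
        rw [Finsupp.mapRange_apply, coeff_divMonomial] at he
        have := mem_zh.1 (hf k) _ he
        rw [map_add, Nat.cast_add, Finsupp.degree_single] at this
        push_cast at this
        linarith
      refine ⟨c, hc, (ih _ (key c hc)).2 ?_⟩
      intro k e he
      have e1 : (f - (X t : MvPolynomial (Fin m) K) • c) k = (f k).modMonomial (Finsupp.single t 1) := by
        rw [Finsupp.sub_apply, Finsupp.smul_apply, smul_eq_mul, sub_eq_iff_eq_add, add_comm]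
        exact (divMonomial_add_modMonomial_single _ _).symm
      rw [e1] at he
      by_cases het : Finsupp.single t 1 ≤ e
      · exact absurd (coeff_modMonomial_of_le _ het) he
      · rw [coeff_modMonomial_of_not_le _ het] at he
        obtain ⟨u, hu, hu'⟩ := h k e he
        rcases List.mem_cons.1 hu with rfl | hu
        · exact absurd (Finsupp.single_le_iff.2 (Nat.one_le_iff_ne_zero.2 hu')) het
        · exact ⟨u, hu, hu'⟩

theorem fr_acyclic {ι : Type} (σ : ι → ℤ) (i j : ℤ) (hi : 1 ≤ i) : V (fr σ : GM m K) i j := by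
  classical
  refine acyclic _ ?_ _ (List.nodup_finRange m) i j hi
  intro t l j b hl hb h
  have hb' := (fr σ : GM m K).xG t _ _ hb
  refine (Qm_fr σ l j b hb).2 ?_
  have h := (Qm_fr σ l _ _ hb').1 h
  intro k e he
  obtain ⟨u, hu, hu'⟩ := h k (e + Finsupp.single t 1) (by
    change coeff (e + Finsupp.single t 1) (X t * DFunLike.coe (F := ι →₀ MvPolynomial (Fin m) K) b k) ≠ 0
    rw [add_comm, coeff_X_mul]; exact he)
  refine ⟨u, hu, ?_⟩
  have : t ≠ u := by rintro rfl; exact (List.nodup_cons.1 hl).1 hu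
  simpa [Finsupp.single_apply, this] using hu'

theorem Qm_fr_full {ι : Type} (σ : ι → ℤ) (j : ℤ) (f : ι →₀ MvPolynomial (Fin m) K)
    (hf : f ∈ (fr σ : GM m K).G j) :
    Qm (fr σ : GM m K) (List.finRange m) j f ↔ ∀ k, coeff 0 (f k) = 0 := by
  rw [Qm_fr σ _ j f hf]
  constructor
  · intro h k
    by_contra h0
    obtain ⟨t, _, ht⟩ := h k 0 h0
    simp at ht
  · intro h k e he
    by_contra hc
    push Not at hc
    have : e = 0 := by ext t; exact hc t (List.mem_finRange t)
    exact he (this ▸ h k)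

theorem fr_V_zero {ι : Type} (σ : ι → ℤ) (j : ℤ) : V (fr σ : GM m K) 0 j ↔ ∀ k, σ k ≠ j := by
  classical
  rw [V_zero_iff]
  constructor
  · rintro h k rfl
    have hk : (Finsupp.single k 1 : ι →₀ MvPolynomial (Fin m) K) ∈ (fr σ : GM m K).G (σ k) := by
      intro k'
      by_cases hkk : k = k'
      · subst hkk
        rw [mem_zh]
        intro e he
        rw [Finsupp.single_eq_same, coeff_one] at he
        have : 0 = e := by by_contra h'; simp [h'] at he
        simp [← this]
      · rw [Finsupp.single_apply, if_neg hkk]; exact zero_mem _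
    have := (Qm_fr_full σ _ _ hk).1 (h _ hk) k
    simp at this
  · intro h b hb
    refine (Qm_fr_full σ _ _ hb).2 fun k => ?_
    by_contra h0
    have := mem_zh.1 (hb k) 0 h0
    simp at this
    exact h k (by linarith)


theorem gses_kosL {L M N : GM m K} {φ : L.M →ₗ[MvPolynomial (Fin m) K] M.M}
    {ψ : M.M →ₗ[MvPolynomial (Fin m) K] N.M} (h : GSES φ ψ) (l : List (Fin m)) :
    ∃ (φ' : (kosL L l).C →ₗ[MvPolynomial (Fin m) K] (kosL M l).C)
      (ψ' : (kosL M l).C →ₗ[MvPolynomial (Fin m) K] (kosL N l).C), SES φ' ψ' ∧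
      ∀ b, φ' (emb L l b) = emb M l (φ b) := by
  induction l with
  | nil => exact ⟨φ, ψ, h.ofMod, fun _ => rfl⟩
  | cons t l ih =>
    obtain ⟨φ', ψ', h', he⟩ := ih
    exact ⟨_, _, h'.cone t, fun b => Prod.ext (he b) (map_zero φ')⟩

/-- graded submodule -/
noncomputable def sub (N : GM m K) (S : Submodule (MvPolynomial (Fin m) K) N.M) : GM m K where
  M := S
  G := fun j => (N.G j).comap S.subtype.toAddMonoidHom
  xG := fun t j c hc => N.xG t j c hc

section step
variable {ι : Type} {σ : ι → ℤ} {N : GM m K}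
  (d : (ι →₀ MvPolynomial (Fin m) K) →ₗ[MvPolynomial (Fin m) K] N.M)

theorem step_ses (hd : ∀ j f, f ∈ (fr σ : GM m K).G j → d f ∈ N.G j)
    (hs : ∀ j c, c ∈ N.G j → ∃ f ∈ (fr σ : GM m K).G j, d f = c) :
    GSES (L := sub (fr σ) (LinearMap.ker d)) (M := fr σ) (N := N) (LinearMap.ker d).subtype d where
  inj := Subtype.val_injective
  φH := fun j c hc => hc
  ψH := hd
  zero := fun c => c.2
  surj := hs
  ex := fun j c hc h0 => ⟨⟨c, h0⟩, hc, rfl⟩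

theorem Qm_lift (hs : ∀ j c, c ∈ N.G j → ∃ f ∈ (fr σ : GM m K).G j, d f = c)
    (l : List (Fin m)) (j : ℤ) (f : ι →₀ MvPolynomial (Fin m) K)
    (h : Qm N l j (d f)) : ∃ g ∈ (fr σ : GM m K).G j, Qm (fr σ : GM m K) l j g ∧ d g = d f := by
  induction l generalizing f with
  | nil => exact ⟨0, zero_mem _, rfl, (map_zero d).trans h.symm⟩
  | cons t l ih =>
    obtain ⟨c, hc, h⟩ := h
    obtain ⟨(c' : ι →₀ MvPolynomial (Fin m) K), hc', ec⟩ := hs _ _ hc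
    have e0 : d f - (X t : MvPolynomial (Fin m) K) • c = d (f - (X t : MvPolynomial (Fin m) K) • c') := by
      rw [map_sub, map_smul]; exact congrArg (fun y => d f - (X t : MvPolynomial (Fin m) K) • y) ec.symm
    rw [e0] at h
    obtain ⟨(g : ι →₀ MvPolynomial (Fin m) K), hg, hQ, e⟩ := ih _ h
    have h1 := (fr σ : GM m K).xG t _ _ hc'
    rw [sub_add_cancel] at h1
    refine ⟨g + (X t : MvPolynomial (Fin m) K) • c', add_mem hg h1, ⟨c', hc', ?_⟩, ?_⟩
    · have e3 : (g + (X t : MvPolynomial (Fin m) K) • c') - (X t : MvPolynomial (Fin m) K) • c' = g :=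
        add_sub_cancel_right _ _
      exact e3.symm ▸ hQ
    · refine (map_add d _ _).trans ?_
      refine (congrArg (· + d ((X t : MvPolynomial (Fin m) K) • c')) e).trans ?_
      change d _ + _ = _
      rw [map_sub]; exact sub_add_cancel _ _

theorem step_zero (hd : ∀ j f, f ∈ (fr σ : GM m K).G j → d f ∈ N.G j)
    (hs : ∀ j c, c ∈ N.G j → ∃ f ∈ (fr σ : GM m K).G j, d f = c)
    (hm : ∀ f, d f = 0 → ∀ k, coeff 0 (f k) = 0) (j : ℤ) :
    V N 0 j ↔ ∀ k, σ k ≠ j := by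
  rw [← fr_V_zero (m := m) (K := K)]
  constructor
  · intro h
    rw [V_zero_iff] at h ⊢
    intro (f : ι →₀ MvPolynomial (Fin m) K) hf
    obtain ⟨(g : ι →₀ MvPolynomial (Fin m) K), hg, hQ, e⟩ := Qm_lift d hs _ j f (h _ (hd _ _ hf))
    refine (Qm_fr_full σ j f hf).2 fun k => ?_
    have h1 := (Qm_fr_full σ j g hg).1 hQ k
    have h2 := hm (f - g : ι →₀ MvPolynomial (Fin m) K) ((map_sub d f g).trans (sub_eq_zero.2 e.symm)) k
    rw [Finsupp.sub_apply, coeff_sub, h1, sub_zero] at h2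
    exact h2
  · intro h
    obtain ⟨φ', ψ', h'⟩ := (step_ses d hd hs).kosL (List.finRange m)
    exact h'.rightV (V_neg _ _ (by norm_num)) h

theorem step_succ (hd : ∀ j f, f ∈ (fr σ : GM m K).G j → d f ∈ N.G j)
    (hs : ∀ j c, c ∈ N.G j → ∃ f ∈ (fr σ : GM m K).G j, d f = c)
    (hm : ∀ f, d f = 0 → ∀ k, coeff 0 (f k) = 0) (i j : ℤ) (hi : 0 ≤ i) :
    V N (i + 1) j ↔ V (sub (fr σ) (LinearMap.ker d)) i j := by
  obtain ⟨φ', ψ', h', he⟩ := gses_kosL (step_ses d hd hs) (List.finRange m)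
  constructor
  · intro h
    rcases eq_or_lt_of_le hi with rfl | hi'
    · refine h'.leftV' h ?_
      intro z hz _
      obtain ⟨b, hb, rfl⟩ := (emb_H _ _ _ _).1 hz
      rw [he]
      exact (Qm_iff (fr σ) _ _ _).2 ((Qm_fr_full σ j _ hb).2 (hm _ b.2))
    · exact h'.leftV h (fr_acyclic σ i j (by omega))
  · intro h
    refine h'.rightV ?_ (fr_acyclic σ _ j (by omega))
    rw [add_sub_cancel_right]; exact h

theorem step_succ' (hd : ∀ j f, f ∈ (fr σ : GM m K).G j → d f ∈ N.G j)
    (hs : ∀ j c, c ∈ N.G j → ∃ f ∈ (fr σ : GM m K).G j, d f = c)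
    (hm : ∀ f, d f = 0 → ∀ k, coeff 0 (f k) = 0) (i j : ℤ) (hi : 0 ≤ i)
    (S : Submodule (MvPolynomial (Fin m) K) (ι →₀ MvPolynomial (Fin m) K))
    (hS : ∀ f, d f = 0 ↔ f ∈ S) :
    V N (i + 1) j ↔ V (sub (fr σ) S) i j := by
  have : S = LinearMap.ker d := by ext f; rw [LinearMap.mem_ker, hS]
  subst this
  exact step_succ d hd hs hm i j hi
end step

/-- homogeneous component, integer degree -/
noncomputable def cmp (z : ℤ) : MvPolynomial (Fin m) K →ₗ[K] MvPolynomial (Fin m) K :=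
  if 0 ≤ z then homogeneousComponent z.toNat else 0

theorem coeff_cmp (z : ℤ) (a : MvPolynomial (Fin m) K) (e : Fin m →₀ ℕ) :
    coeff e (cmp z a) = if (e.degree : ℤ) = z then coeff e a else 0 := by
  unfold cmp
  split_ifs with h1 h2 h2
  · rw [coeff_homogeneousComponent, if_pos (by omega)]
  · rw [coeff_homogeneousComponent, if_neg (by omega)]
  · omega
  · simp

theorem cmp_mem (z : ℤ) (a : MvPolynomial (Fin m) K) : cmp z a ∈ zh m K z := by
  rw [mem_zh]
  intro e he
  rw [coeff_cmp] at he
  by_contra h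
  simp [h] at he

theorem cmp_of_mem {z : ℤ} {a : MvPolynomial (Fin m) K} (h : a ∈ zh m K z) : cmp z a = a := by
  rw [mem_zh] at h
  ext e
  rw [coeff_cmp]
  split_ifs with h1
  · rfl
  · by_contra h2
    exact h1 (h e (Ne.symm h2))

theorem cmp_of_mem_ne {y z : ℤ} {a : MvPolynomial (Fin m) K} (h : a ∈ zh m K y) (hyz : y ≠ z) :
    cmp z a = 0 := by
  rw [mem_zh] at h
  ext e
  rw [coeff_cmp]
  split_ifs with h1
  · by_contra h2
    exact hyz ((h e h2).symm.trans h1)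
  · rfl

noncomputable def proj {ι : Type} (σ : ι → ℤ) (j : ℤ) :
    (ι →₀ MvPolynomial (Fin m) K) →+ (ι →₀ MvPolynomial (Fin m) K) where
  toFun f := Finsupp.onFinset f.support (fun k => cmp (j - σ k) (f k)) (by
    intro k hk
    rw [Finsupp.mem_support_iff]
    rintro h
    simp [h] at hk)
  map_zero' := by ext k : 1; simp
  map_add' := by intro a b; ext k : 1; simp

theorem proj_apply {ι : Type} (σ : ι → ℤ) (j : ℤ) (f : ι →₀ MvPolynomial (Fin m) K) (k : ι) :
    proj σ j f k = cmp (j - σ k) (f k) := rfl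

theorem proj_mem {ι : Type} (σ : ι → ℤ) (j : ℤ) (f : ι →₀ MvPolynomial (Fin m) K) :
    proj σ j f ∈ (fr σ : GM m K).G j := fun _ => cmp_mem _ _

theorem proj_of_mem {ι : Type} (σ : ι → ℤ) (j : ℤ) (f : ι →₀ MvPolynomial (Fin m) K)
    (hf : f ∈ (fr σ : GM m K).G j) : proj σ j f = f := by
  ext k : 1
  rw [proj_apply, cmp_of_mem (hf k)]

theorem proj_of_mem_ne {ι : Type} (σ : ι → ℤ) (i j : ℤ) (f : ι →₀ MvPolynomial (Fin m) K)
    (hf : f ∈ (fr σ : GM m K).G i) (h : i ≠ j) : proj σ j f = 0 := by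
  ext k : 1
  rw [proj_apply, cmp_of_mem_ne (hf k) (by simpa using h)]; rfl

def HasProj (N : GM m K) (j : ℤ) (π : N.M →+ N.M) : Prop :=
  (∀ c ∈ N.G j, π c = c) ∧ ∀ i, i ≠ j → ∀ c ∈ N.G i, π c = 0

theorem hasProj_fr {ι : Type} (σ : ι → ℤ) (j : ℤ) : HasProj (fr σ : GM m K) j (proj σ j) :=
  ⟨fun c hc => proj_of_mem σ j c hc, fun i hi c hc => proj_of_mem_ne σ i j c hc hi⟩

theorem proj_comm {ι : Type} {σ : ι → ℤ} {N : GM m K} {j : ℤ} {π : N.M →+ N.M}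
    (hπ : HasProj N j π)
    (d : (ι →₀ MvPolynomial (Fin m) K) →ₗ[MvPolynomial (Fin m) K] N.M)
    (hd : ∀ j f, f ∈ (fr σ : GM m K).G j → d f ∈ N.G j) (f : ι →₀ MvPolynomial (Fin m) K) :
    π (d f) = d (proj σ j f) := by
  classical
  induction f using Finsupp.induction_linear with
  | zero => simp
  | add f g hf hg => rw [map_add, map_add, map_add, map_add, hf, hg]
  | single k a =>
    induction a using MvPolynomial.induction_on' with
    | add p q hp hq => rw [Finsupp.single_add, map_add, map_add, map_add, map_add, hp, hq]
    | monomial e c =>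
      have hmem : (Finsupp.single k (monomial e c) : ι →₀ MvPolynomial (Fin m) K) ∈
          (fr σ : GM m K).G (e.degree + σ k) := by
        intro k'
        by_cases hk : k = k'
        · subst hk
          rw [mem_zh]
          intro e' he'
          rw [Finsupp.single_eq_same, coeff_monomial] at he'
          have : e = e' := by by_contra h; simp [h] at he'
          subst this; ring
        · rw [Finsupp.single_apply, if_neg hk]; exact zero_mem _
      by_cases h : (e.degree + σ k : ℤ) = j
      · rw [h] at hmem
        rw [proj_of_mem _ _ _ hmem]
        exact hπ.1 _ (hd _ _ hmem)
      · rw [proj_of_mem_ne _ _ _ _ hmem h, map_zero]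
        exact hπ.2 _ h _ (hd _ _ hmem)

theorem surj_graded {ι : Type} {σ : ι → ℤ} {N : GM m K} {j : ℤ} {π : N.M →+ N.M}
    (hπ : HasProj N j π)
    (d : (ι →₀ MvPolynomial (Fin m) K) →ₗ[MvPolynomial (Fin m) K] N.M)
    (hd : ∀ j f, f ∈ (fr σ : GM m K).G j → d f ∈ N.G j) (c : N.M) (hc : c ∈ N.G j)
    (hr : c ∈ LinearMap.range d) : ∃ f ∈ (fr σ : GM m K).G j, d f = c := by
  obtain ⟨f, rfl⟩ := hr
  exact ⟨proj σ j f, proj_mem σ j f, by rw [← proj_comm hπ d hd, hπ.1 _ hc]⟩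

/-- quotient graded module -/
noncomputable def qm (J : Ideal (MvPolynomial (Fin m) K)) : GM m K where
  M := MvPolynomial (Fin m) K ⧸ J
  G := fun j => (quotPieces (homogeneousSubmodule (Fin m) K) J j).toAddSubgroup
  xG := by
    rintro t j c ⟨a, ha, rfl⟩
    refine ⟨X t * a, ?_, ?_⟩
    · have := mul_zh (X_zh t) ha
      rw [add_comm] at this
      exact this
    · rfl

theorem mem_qm {J : Ideal (MvPolynomial (Fin m) K)} {j : ℤ} {c : MvPolynomial (Fin m) K ⧸ J} :
    c ∈ (qm J).G j ↔ ∃ a ∈ zh m K j, Ideal.Quotient.mk J a = c := Iff.rfl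

/-- homogeneous ideal -/
def HI (J : Ideal (MvPolynomial (Fin m) K)) : Prop := ∀ z, ∀ a ∈ J, cmp z a ∈ J

theorem hasProj_qm {J : Ideal (MvPolynomial (Fin m) K)} (hJ : HI J) (j : ℤ) :
    ∃ π, HasProj (qm J) j π := by
  refine ⟨QuotientAddGroup.map J.toAddSubgroup J.toAddSubgroup (cmp j).toAddMonoidHom (hJ j), ?_, ?_⟩
  · rintro c ⟨a, ha, rfl⟩
    exact congrArg (Ideal.Quotient.mk J) (cmp_of_mem ha)
  · rintro i hi c ⟨a, ha, rfl⟩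
    exact (congrArg (Ideal.Quotient.mk J) (cmp_of_mem_ne ha hi)).trans (map_zero _)

theorem irrel_coeff {a : MvPolynomial (Fin m) K} (ha : a ∈ irrel (homogeneousSubmodule (Fin m) K)) :
    coeff 0 a = 0 := by
  have : irrel (homogeneousSubmodule (Fin m) K) ≤ RingHom.ker (constantCoeff (R := K) (σ := Fin m)) := by
    refine Ideal.span_le.2 ?_
    rintro b hb
    obtain ⟨n, hn⟩ := Set.mem_iUnion.1 hb
    have : b ∈ zh m K ((n + 1 : ℕ) : ℤ) := by
      unfold zh zg
      rw [if_pos (by positivity)]; exact hn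
    rw [mem_zh] at this
    change coeff 0 b = 0
    by_contra h
    have := this 0 h
    simp at this
    omega
  exact this ha

theorem irrel_smul {ι : Type} {f : ι →₀ MvPolynomial (Fin m) K}
    (hf : f ∈ irrel (homogeneousSubmodule (Fin m) K) •
      (⊤ : Submodule (MvPolynomial (Fin m) K) (ι →₀ MvPolynomial (Fin m) K))) (k : ι) :
    coeff 0 (f k) = 0 := by
  refine irrel_coeff ?_
  refine Submodule.smul_induction_on hf ?_ ?_
  · intro r hr g _
    exact Ideal.mul_mem_right _ _ hr
  · intro x y hx hy
    exact add_mem hx hy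

section res
variable {J : Ideal (MvPolynomial (Fin m) K)}
  (R : MinGradedFreeRes K (MvPolynomial (Fin m) K) (zg (homogeneousSubmodule (Fin m) K))
    (irrel (homogeneousSubmodule (Fin m) K)) (MvPolynomial (Fin m) K ⧸ J)
    (quotPieces (homogeneousSubmodule (Fin m) K) J))

noncomputable def syz (i : ℕ) : GM m K := sub (fr (R.σ i)) (LinearMap.range (R.d i))

theorem syz_aux (i : ℕ) : (∀ j f, f ∈ (fr (R.σ (i+1)) : GM m K).G j →
      (R.d i).rangeRestrict f ∈ (syz R i).G j) ∧
    (∀ j c, c ∈ (syz R i).G j → ∃ f ∈ (fr (R.σ (i+1)) : GM m K).G j, (R.d i).rangeRestrict f = c) ∧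
    (∀ f, (R.d i).rangeRestrict f = 0 → ∀ k, coeff 0 (f k) = 0) := by
  have hg : ∀ j f, f ∈ (fr (R.σ (i+1)) : GM m K).G j → R.d i f ∈ (fr (R.σ i) : GM m K).G j :=
    fun j f hf => R.graded_d i j f hf
  refine ⟨hg, ?_, ?_⟩
  · rintro j ⟨c, hc'⟩ hc
    obtain ⟨f, hf, e⟩ := surj_graded (N := fr (R.σ i)) (hasProj_fr (R.σ i) j) (R.d i) hg c hc hc'
    exact ⟨f, hf, Subtype.ext e⟩
  · intro f hf k
    have : R.d i f = 0 := congrArg Subtype.val hf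
    obtain ⟨g, rfl⟩ := (R.exact_d i f).1 this
    exact irrel_smul (R.minimal _ g) k

theorem syz_V (q i : ℕ) (j : ℤ) : V (syz R i) q j ↔ ∀ k, R.σ (i + q + 1) k ≠ j := by
  induction q generalizing i with
  | zero =>
    obtain ⟨h1, h2, h3⟩ := syz_aux R i
    exact step_zero (N := syz R i) (R.d i).rangeRestrict h1 h2 h3 j
  | succ q ih =>
    obtain ⟨h1, h2, h3⟩ := syz_aux R i
    have := step_succ' (N := syz R i) (R.d i).rangeRestrict h1 h2 h3 q j (by positivity)
      (LinearMap.range (R.d (i + 1))) (fun f => by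
        rw [← (R.exact_d i).linearMap_ker_eq]
        exact Subtype.ext_iff)
    push_cast
    refine this.trans ((ih (i + 1)).trans ?_)
    rw [show i + 1 + q + 1 = i + (q + 1) + 1 by ring]

theorem res_V (hJ : HI J) (q : ℕ) (j : ℤ) : V (qm J) q j ↔ ∀ k, R.σ q k ≠ j := by
  have hg : ∀ j f, f ∈ (fr (R.σ 0) : GM m K).G j → R.ε f ∈ (qm J).G j :=
    fun j f hf => R.graded_ε j f hf
  have hs : ∀ j c, c ∈ (qm J).G j → ∃ f ∈ (fr (R.σ 0) : GM m K).G j, R.ε f = c := by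
    intro j c hc
    obtain ⟨π, hπ⟩ := hasProj_qm hJ j
    exact surj_graded hπ R.ε hg c hc (R.surj c)
  have hm : ∀ f, R.ε f = 0 → ∀ k, coeff 0 (f k) = 0 := by
    intro f hf k
    obtain ⟨g, rfl⟩ := (R.exact_ε f).1 hf
    exact irrel_smul (R.minimal _ g) k
  cases q with
  | zero => exact step_zero (N := qm J) R.ε hg hs hm j
  | succ q =>
    have := step_succ' (N := qm J) R.ε hg hs hm q j (by positivity)
      (LinearMap.range (R.d 0)) (fun f => by
        rw [← R.exact_ε.linearMap_ker_eq]
        exact Iff.rfl)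
    push_cast
    refine this.trans ((syz_V R q 0 j).trans ?_)
    rw [Nat.zero_add]

theorem reg_of_regEq (hJ : HI J) {c : ℤ} (h : regEq (qm J) c) : R.reg = c := by
  obtain ⟨h1, i, hi⟩ := h
  refine IsGreatest.csSup_eq ⟨?_, ?_⟩
  · have hi0 : 0 ≤ i := by
      by_contra h0
      exact hi (V_neg _ _ (by omega))
    lift i to ℕ using hi0
    rw [res_V R hJ] at hi
    push Not at hi
    obtain ⟨k, hk⟩ := hi
    exact ⟨i, k, by rw [hk]; ring⟩
  · rintro x ⟨i, k, rfl⟩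
    by_contra hc
    exact (res_V R hJ i _).1 (h1 i (R.σ i k) (by linarith)) k rfl

theorem regLE_of_reg (hJ : HI J) {c : ℤ} (h : R.reg < c) : regLE (qm J) (c - 1) := by
  have hb : BddAbove {x : ℤ | ∃ (i : ℕ) (k : R.ι i), x = R.σ i k - (i : ℤ)} := by
    refine Set.Finite.bddAbove ?_
    refine Set.Finite.subset (s := ⋃ i ∈ Finset.range (m + 1), Set.range fun k => R.σ i k - (i : ℤ)) ?_ ?_
    · refine Set.Finite.biUnion (Finset.finite_toSet _) fun i _ => ?_
      have := R.fin i
      exact Set.finite_range _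
    · rintro x ⟨i, k, rfl⟩
      refine Set.mem_biUnion (x := i) ?_ ⟨k, rfl⟩
      simp only [Finset.coe_range, Set.mem_Iio]
      by_contra hi
      exact (res_V R hJ i _).1 (V_big _ _ (by omega)) k rfl
  intro i j hij
  rcases lt_or_ge i 0 with hi | hi
  · exact V_neg _ _ hi
  · lift i to ℕ using hi
    rw [res_V R hJ]
    rintro k rfl
    have : R.σ i k - (i : ℤ) ≤ R.reg := le_csSup hb ⟨i, k, rfl⟩
    omega
end res


theorem sum_proj {n : ℕ} (σ : Fin n → ℤ) (f : Fin n →₀ MvPolynomial (Fin m) K) :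
    ∃ T : Finset ℤ, f = ∑ j ∈ T, proj σ j f := by
  classical
  refine ⟨f.support.biUnion fun k => (f k).support.image fun e => (e.degree : ℤ) + σ k, ?_⟩
  ext k e
  rw [Finsupp.finsetSum_apply, coeff_sum]
  simp only [proj_apply, coeff_cmp]
  have : ∀ j : ℤ, ((e.degree : ℤ) = j - σ k) ↔ (e.degree + σ k : ℤ) = j := by
    intro j; constructor <;> intro h <;> linarith
  simp only [this]
  rw [Finset.sum_ite_eq]
  split_ifs with h
  · rfl
  · by_contra h0
    refine h (Finset.mem_biUnion.2 ⟨k, ?_, Finset.mem_image.2 ⟨e, ?_, rfl⟩⟩)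
    · rw [Finsupp.mem_support_iff]; rintro h1; simp [h1] at h0
    · rw [mem_support_iff]; exact h0

structure St (m : ℕ) (K : Type) [Field K] where
  n : ℕ
  σ : Fin n → ℤ
  Z : Submodule (MvPolynomial (Fin m) K) (Fin n →₀ MvPolynomial (Fin m) K)
  hom : ∀ j f, f ∈ Z → proj σ j f ∈ Z
  min : ∀ f ∈ Z, ∀ k, coeff 0 (f k) = 0

theorem St.gens (S : St m K) : ∃ (p : ℕ) (g : Fin p → (Fin S.n →₀ MvPolynomial (Fin m) K))
    (τ : Fin p → ℤ), (∀ k, g k ∈ (fr S.σ : GM m K).G (τ k)) ∧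
      Submodule.span (MvPolynomial (Fin m) K) (Set.range g) = S.Z := by
  classical
  let s : Set (Fin S.n →₀ MvPolynomial (Fin m) K) := {f | f ∈ S.Z ∧ ∃ j, f ∈ (fr S.σ : GM m K).G j}
  have hs : Submodule.span (MvPolynomial (Fin m) K) s = S.Z := by
    refine le_antisymm (Submodule.span_le.2 fun f hf => hf.1) ?_
    intro f hf
    obtain ⟨T, hT⟩ := sum_proj S.σ f
    rw [hT]
    exact sum_mem fun j _ => Submodule.subset_span ⟨S.hom j f hf, j, proj_mem _ _ _⟩
  have hfg : (Submodule.span (MvPolynomial (Fin m) K) s).FG := IsNoetherian.noetherian _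
  obtain ⟨s', hs', e⟩ := (Submodule.fg_span_iff_fg_span_finset_subset s).1 hfg
  have hg : ∀ k : Fin s'.card, ((s'.equivFin.symm k : s') : Fin S.n →₀ MvPolynomial (Fin m) K) ∈ s :=
    fun k => hs' (s'.equivFin.symm k).2
  choose hg1 τ hτ using hg
  refine ⟨s'.card, fun k => (s'.equivFin.symm k : s'), τ, hτ, ?_⟩
  rw [← hs, e]
  congr 1
  ext x
  constructor
  · rintro ⟨k, rfl⟩; exact (s'.equivFin.symm k).2
  · intro hx; exact ⟨s'.equivFin ⟨x, hx⟩, by simp⟩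

theorem St.next_aux (S : St m K) : ∃ (p : ℕ) (τ : Fin p → ℤ)
    (d : (Fin p →₀ MvPolynomial (Fin m) K) →ₗ[MvPolynomial (Fin m) K]
      (Fin S.n →₀ MvPolynomial (Fin m) K)),
    LinearMap.range d = S.Z ∧
    (∀ j f, f ∈ (fr τ : GM m K).G j → d f ∈ (fr S.σ : GM m K).G j) ∧
    (∀ f, d f = 0 → ∀ k, coeff 0 (f k) = 0) := by
  classical
  have hex := S.gens
  obtain ⟨g, τ, hg, hspan⟩ := Nat.find_spec hex
  have hmin := fun q => Nat.find_min hex (m := q)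
  generalize Nat.find hex = p at g τ hg hspan hmin
  have hgr : ∀ j f, f ∈ (fr τ : GM m K).G j →
      Finsupp.linearCombination (MvPolynomial (Fin m) K) g f ∈ (fr S.σ : GM m K).G j := by
    intro j (f : Fin p →₀ MvPolynomial (Fin m) K) hf
    rw [Finsupp.linearCombination_apply]
    refine AddSubgroup.sum_mem _ fun k _ => ?_
    intro i
    have := mul_zh (hf k) (hg k i)
    rw [show j - τ k + (τ k - S.σ i) = j - S.σ i by ring] at this
    exact this
  refine ⟨p, τ, Finsupp.linearCombination _ g, ?_, hgr, ?_⟩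
  · rw [Finsupp.range_linearCombination, hspan]
  · intro f hf k0
    by_contra h0
    cases p with
    | zero => exact k0.elim0
    | succ p =>
    have h1 := proj_comm (N := fr S.σ) (hasProj_fr S.σ (τ k0)) _ hgr f
    have h2 : Finsupp.linearCombination (MvPolynomial (Fin m) K) g (proj τ (τ k0) f) = 0 :=
      h1.symm.trans ((congrArg (proj S.σ (τ k0)) hf).trans (map_zero (proj S.σ (τ k0))))
    have h3 : proj τ (τ k0) f k0 = C (coeff 0 (f k0)) := by
      rw [proj_apply]
      ext e
      rw [coeff_cmp, coeff_C, sub_self]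
      by_cases he : 0 = e
      · subst he; simp
      · have : ¬ ((e.degree : ℤ) = 0) := by
          rw [Nat.cast_eq_zero, Finsupp.degree_eq_zero_iff]; exact fun h => he h.symm
        rw [if_neg this, if_neg he]
    rw [Finsupp.linearCombination_apply, Finsupp.sum_fintype _ _ (by simp),
      Fin.sum_univ_succAbove _ k0, h3] at h2
    have hmem : g k0 ∈ Submodule.span (MvPolynomial (Fin m) K) (Set.range (g ∘ k0.succAbove)) := by
      have e4 : g k0 = (C (coeff 0 (f k0))⁻¹ : MvPolynomial (Fin m) K) • ((C (coeff 0 (f k0)) : MvPolynomial (Fin m) K) • g k0) := by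
        rw [smul_smul, ← C_mul, inv_mul_cancel₀ h0, C_1, one_smul]
      rw [e4, eq_neg_of_add_eq_zero_left h2]
      refine Submodule.smul_mem _ _ (Submodule.neg_mem _ (Submodule.sum_mem _ fun k _ => ?_))
      exact Submodule.smul_mem _ _ (Submodule.subset_span ⟨k, rfl⟩)
    refine hmin p (Nat.lt_succ_self p) ⟨g ∘ k0.succAbove, τ ∘ k0.succAbove, fun k => hg _, ?_⟩
    rw [← hspan]
    refine le_antisymm (Submodule.span_mono ?_) (Submodule.span_le.2 ?_)
    · rintro _ ⟨k, rfl⟩; exact ⟨_, rfl⟩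
    · rintro _ ⟨k, rfl⟩
      rcases Fin.eq_self_or_eq_succAbove k0 k with rfl | ⟨k', rfl⟩
      · exact hmem
      · exact Submodule.subset_span ⟨k', rfl⟩

noncomputable def St.p (S : St m K) : ℕ := S.next_aux.choose
noncomputable def St.τ (S : St m K) : Fin S.p → ℤ := S.next_aux.choose_spec.choose
noncomputable def St.d (S : St m K) : (Fin S.p →₀ MvPolynomial (Fin m) K) →ₗ[MvPolynomial (Fin m) K]
      (Fin S.n →₀ MvPolynomial (Fin m) K) := S.next_aux.choose_spec.choose_spec.choose
theorem St.d_spec (S : St m K) : LinearMap.range S.d = S.Z ∧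
    (∀ j f, f ∈ (fr S.τ : GM m K).G j → S.d f ∈ (fr S.σ : GM m K).G j) ∧
    (∀ f, S.d f = 0 → ∀ k, coeff 0 (f k) = 0) := S.next_aux.choose_spec.choose_spec.choose_spec

noncomputable def St.next (S : St m K) : St m K where
  n := S.p
  σ := S.τ
  Z := LinearMap.ker S.d
  hom := by
    intro j f hf
    have h1 := proj_comm (N := fr S.σ) (hasProj_fr S.σ j) _ S.d_spec.2.1 f
    rw [LinearMap.mem_ker] at hf ⊢
    exact h1.symm.trans ((congrArg (proj S.σ j) hf).trans (map_zero (proj S.σ j)))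
  min := fun f hf => S.d_spec.2.2 f hf

theorem mem_irrel {a : MvPolynomial (Fin m) K} (ha : coeff 0 a = 0) :
    a ∈ irrel (homogeneousSubmodule (Fin m) K) := by
  have h1 : a ∈ Ideal.span (X '' (Set.univ : Set (Fin m)) : Set (MvPolynomial (Fin m) K)) := by
    rw [mem_ideal_span_X_image]
    intro e he
    by_contra hc
    push Not at hc
    have : e = 0 := by ext t; exact hc t trivial
    rw [mem_support_iff, this] at he
    exact he ha
  refine Ideal.span_mono ?_ h1
  rintro _ ⟨t, -, rfl⟩
  exact Set.mem_iUnion.2 ⟨0, isHomogeneous_X K t⟩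

theorem mem_irrel_smul {n : ℕ} {f : Fin n →₀ MvPolynomial (Fin m) K}
    (hf : ∀ k, coeff 0 (f k) = 0) : f ∈ irrel (homogeneousSubmodule (Fin m) K) •
      (⊤ : Submodule (MvPolynomial (Fin m) K) (Fin n →₀ MvPolynomial (Fin m) K)) := by
  rw [← Finsupp.sum_single f]
  refine Submodule.sum_mem _ fun k _ => ?_
  rw [← mul_one (f k), ← smul_eq_mul, ← Finsupp.smul_single]
  exact Submodule.smul_mem_smul (mem_irrel (hf k)) trivial

noncomputable def st0 (J : Ideal (MvPolynomial (Fin m) K)) (hJ : HI J) (h0 : ∀ a ∈ J, coeff 0 a = 0) :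
    St m K where
  n := 1
  σ := fun _ => 0
  Z := Submodule.comap (Finsupp.lapply 0) J
  hom := by
    intro j f hf
    exact hJ _ _ hf
  min := by
    intro f hf k
    rw [Subsingleton.elim k 0]
    exact h0 _ hf

noncomputable def stN (J : Ideal (MvPolynomial (Fin m) K)) (hJ : HI J) (h0 : ∀ a ∈ J, coeff 0 a = 0) :
    ℕ → St m K
  | 0 => st0 J hJ h0
  | i + 1 => (stN J hJ h0 i).next

theorem exists_res (J : Ideal (MvPolynomial (Fin m) K)) (hJ : HI J) (h0 : ∀ a ∈ J, coeff 0 a = 0) :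
    Nonempty (MinGradedFreeRes K (MvPolynomial (Fin m) K) (zg (homogeneousSubmodule (Fin m) K))
    (irrel (homogeneousSubmodule (Fin m) K)) (MvPolynomial (Fin m) K ⧸ J)
    (quotPieces (homogeneousSubmodule (Fin m) K) J)) := by
  let s := stN J hJ h0
  refine ⟨{
    ι := fun i => Fin (s i).n
    fin := fun i => inferInstance
    σ := fun i => (s i).σ
    d := fun i => (s i).d
    ε := J.mkQ.comp (Finsupp.lapply (0 : Fin 1))
    exact_d := ?_
    exact_ε := ?_
    surj := ?_
    graded_d := ?_
    graded_ε := ?_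
    minimal := ?_ }⟩
  · intro i
    intro f
    have h1 := (s (i + 1)).d_spec.1
    change _ ↔ f ∈ LinearMap.range (s (i + 1)).d
    rw [h1]
    exact Iff.rfl
  · intro f
    have h1 := (s 0).d_spec.1
    change _ ↔ f ∈ LinearMap.range (s 0).d
    rw [h1]
    exact Submodule.Quotient.mk_eq_zero J
  · intro c
    obtain ⟨a, rfl⟩ := Submodule.mkQ_surjective J c
    refine ⟨(Finsupp.single (0 : Fin 1) a : Fin 1 →₀ MvPolynomial (Fin m) K), ?_⟩
    change J.mkQ ((Finsupp.single (0 : Fin 1) a : Fin 1 →₀ MvPolynomial (Fin m) K) 0) = _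
    rw [Finsupp.single_eq_same]
  · intro i j f hf
    exact (s i).d_spec.2.1 j f hf
  · intro j (f : Fin 1 →₀ MvPolynomial (Fin m) K) hf
    have : f 0 ∈ zh m K (j - (0 : ℤ)) := hf (0 : Fin 1)
    refine ⟨f 0, ?_, rfl⟩
    rw [sub_zero] at this
    exact this
  · intro i f
    refine mem_irrel_smul ((s i).min _ ?_)
    rw [← (s i).d_spec.1]
    exact ⟨f, rfl⟩


section alg
variable {A : Type*} [CommRing A] {n : ℕ} {f : Fin (n + 1) → A}

theorem mulL {I J : Ideal A} {x : A} (h : x ∈ I * J) : x ∈ I :=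
  Submodule.mul_induction_on h (fun a ha b _ => Ideal.mul_mem_right b I ha) fun _ _ => Ideal.add_mem _

def Jn (f : Fin (n + 1) → A) (i : ℕ) : Ideal A := Ideal.span (f '' {j | (j : ℕ) < i})

theorem Jn_succ (f : Fin (n + 1) → A) (i : Fin (n + 1)) :
    Jn f (i + 1) = Jn f i ⊔ Ideal.span {f i} := by
  rw [Jn, Jn, ← Ideal.span_union]
  congr 1
  ext x
  constructor
  · rintro ⟨j, hj, rfl⟩
    have hj' : (j : ℕ) < i + 1 := hj
    rcases Nat.lt_succ_iff_lt_or_eq.1 hj' with h | h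
    · exact Or.inl ⟨j, h, rfl⟩
    · exact Or.inr (congrArg f (Fin.ext h))
  · rintro (⟨j, hj, rfl⟩ | rfl)
    · exact ⟨j, Nat.lt_succ_of_lt hj, rfl⟩
    · exact ⟨i, Nat.lt_succ_self _, rfl⟩

theorem Jn_top (f : Fin (n + 1) → A) : Jn f (n + 1) = Ideal.span (Set.range f) := by
  rw [Jn]
  congr 1
  ext x
  constructor
  · rintro ⟨j, hj, rfl⟩; exact ⟨j, rfl⟩
  · rintro ⟨j, rfl⟩; exact ⟨j, j.2, rfl⟩

theorem Jn_zero (f : Fin (n + 1) → A) : Jn f 0 = ⊥ := by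
  rw [Jn, Ideal.span_eq_bot]
  rintro _ ⟨j, hj, rfl⟩
  exact absurd hj (Nat.not_lt_zero _)

theorem Jn_le (f : Fin (n + 1) → A) (i : ℕ) : Jn f i ≤ Ideal.span (Set.range f) :=
  Ideal.span_mono (Set.image_subset_range _ _)

theorem mem_I (f : Fin (n + 1) → A) (i : Fin (n + 1)) : f i ∈ Ideal.span (Set.range f) :=
  Ideal.subset_span ⟨i, rfl⟩

theorem dseq (hd : IsDSequence f) (i : Fin (n + 1)) {x : A} (h : x * f i ∈ Jn f i)
    (hx : x ∈ Ideal.span (Set.range f)) : x ∈ Jn f i := by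
  have h1 := hd i
  have h2 : x ∈ (Ideal.span (f '' {j | j < i})).colon (Ideal.span {f i} : Ideal A) ⊓
      Ideal.span (Set.range f) := by
    refine ⟨?_, hx⟩
    rw [SetLike.mem_coe, Submodule.mem_colon]
    intro p hp
    obtain ⟨c, rfl⟩ := Ideal.mem_span_singleton'.1 hp
    rw [smul_eq_mul, show x * (c * f i) = c * (x * f i) by ring]
    exact Ideal.mul_mem_left _ c h
  rw [h1] at h2
  exact h2

theorem rseq (hrs : IsRegSeq (f ∘ Fin.castSucc)) (i : Fin n) {x : A}
    (h : x * f i.castSucc ∈ Jn f i) : x ∈ Jn f i := by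
  have e : Jn f i = Ideal.span ((f ∘ Fin.castSucc) '' {j | j < i}) := by
    rw [Jn]
    congr 1
    ext x
    constructor
    · rintro ⟨j, hj, rfl⟩
      have hj' : (j : ℕ) < i := hj
      exact ⟨⟨j, hj'.trans i.2⟩, hj', rfl⟩
    · rintro ⟨j, hj, rfl⟩
      exact ⟨j.castSucc, hj, rfl⟩
  rw [e] at h ⊢
  exact hrs.1 i x h

theorem inter (hd : IsDSequence f) (s k : ℕ) (hk : k ≤ n + 1) :
    Jn f (n + 1 - k) ⊓ Ideal.span (Set.range f) ^ (s + 1) ≤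
      Jn f (n + 1 - k) * Ideal.span (Set.range f) ^ s := by
  induction s generalizing k with
  | zero => rw [pow_zero, mul_one]; exact inf_le_left
  | succ s ihs =>
  induction k with
  | zero => rw [Nat.sub_zero, Jn_top, ← pow_succ']; exact inf_le_right
  | succ k ih =>
    rintro y ⟨hy1, hy2⟩
    obtain ⟨i, hi⟩ : ∃ i : Fin (n + 1), (i : ℕ) = n + 1 - (k + 1) :=
      ⟨⟨n + 1 - (k + 1), by omega⟩, rfl⟩
    have hi' : n + 1 - k = i + 1 := by omega
    have ih2 := ihs (k + 1) hk
    rw [← hi] at hy1 ih2 ⊢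
    have h1 : y ∈ Jn f (n + 1 - k) * Ideal.span (Set.range f) ^ (s + 1) := by
      refine ih (by omega) ⟨?_, hy2⟩
      rw [hi', Jn_succ]; exact Ideal.mem_sup_left hy1
    rw [hi', Jn_succ, Ideal.sup_mul] at h1
    obtain ⟨a, ha, b, hb, rfl⟩ := Submodule.mem_sup.1 h1
    obtain ⟨c, hc, rfl⟩ := Ideal.mem_span_singleton_mul.1 hb
    have h2 : c * f i ∈ Jn f i := by
      rw [mul_comm]
      exact (Ideal.add_mem_iff_right _ (mulL ha)).1 hy1
    have h3 : c ∈ Jn f i := dseq hd i h2 (Ideal.pow_le_self (Nat.succ_ne_zero s) hc)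
    refine Ideal.add_mem _ ha ?_
    have h4 := ih2 ⟨h3, hc⟩
    rw [pow_succ, ← mul_assoc, mul_comm (f i)]
    exact Ideal.mul_mem_mul h4 (mem_I f i)

theorem colonS (hd : IsDSequence f) (hrs : IsRegSeq (f ∘ Fin.castSucc)) (i : Fin n) (s : ℕ) (x : A) :
    x ∈ Jn f i ⊔ Ideal.span (Set.range f) ^ (s + 1) ↔
      x * f i.castSucc ∈ Jn f i ⊔ Ideal.span (Set.range f) ^ (s + 2) := by
  constructor
  · intro h
    obtain ⟨a, ha, b, hb, rfl⟩ := Submodule.mem_sup.1 h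
    rw [add_mul]
    refine Ideal.add_mem _ (Ideal.mem_sup_left (Ideal.mul_mem_right _ _ ha)) (Ideal.mem_sup_right ?_)
    rw [show s + 2 = (s + 1) + 1 from rfl, pow_succ]
    exact Ideal.mul_mem_mul hb (mem_I f _)
  · intro h
    obtain ⟨a, ha, b, hb, e⟩ := Submodule.mem_sup.1 h
    have e1 : b = x * f i.castSucc - a := by rw [← e]; ring
    have hs : Jn f (i + 1) = Jn f i ⊔ Ideal.span {f i.castSucc} := Jn_succ f i.castSucc
    have h1 : b ∈ Jn f (i + 1) := by
      rw [hs, e1]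
      exact Ideal.sub_mem _ (Ideal.mem_sup_right (Ideal.mul_mem_left _ _ (Ideal.mem_span_singleton_self _)))
        (Ideal.mem_sup_left ha)
    have h2 := inter hd (s + 1) (n - i) (by omega)
    rw [show n + 1 - (n - (i : ℕ)) = i + 1 by omega] at h2
    have h3 := h2 ⟨h1, hb⟩
    rw [hs, Ideal.sup_mul] at h3
    obtain ⟨a', ha', b', hb', e'⟩ := Submodule.mem_sup.1 h3
    obtain ⟨c, hc, rfl⟩ := Ideal.mem_span_singleton_mul.1 hb'
    have h4 : (x - c) * f i.castSucc ∈ Jn f i := by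
      have : (x - c) * f i.castSucc = a + a' := by
        rw [sub_mul, ← e, ← e']; ring
      rw [this]
      exact Ideal.add_mem _ ha (mulL ha')
    have h5 := rseq hrs i h4
    rw [← sub_add_cancel x c]
    exact Ideal.add_mem _ (Ideal.mem_sup_left h5) (Ideal.mem_sup_right hc)

theorem colonN (hd : IsDSequence f) (s : ℕ) (x : A) :
    x * f (Fin.last n) ∈ Jn f n ↔ x * f (Fin.last n) ^ (s + 1) ∈ Jn f n := by
  induction s with
  | zero => simp
  | succ s ih =>
    rw [ih]
    constructor
    · intro h
      rw [pow_succ _ (s + 1), ← mul_assoc]; exact Ideal.mul_mem_right _ _ h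
    · intro h
      rw [pow_succ _ (s + 1), ← mul_assoc] at h
      refine dseq hd (Fin.last n) h ?_
      rw [pow_succ, ← mul_assoc]
      exact Ideal.mul_mem_left _ _ (mem_I f _)

theorem Jn_I (f : Fin (n + 1) → A) :
    Ideal.span (Set.range f) = Jn f n ⊔ Ideal.span {f (Fin.last n)} := by
  rw [← Jn_top]; exact Jn_succ f (Fin.last n)

theorem Jn_pow (f : Fin (n + 1) → A) (s : ℕ) :
    Jn f n ⊔ Ideal.span (Set.range f) ^ s = Jn f n ⊔ Ideal.span {f (Fin.last n) ^ s} := by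
  apply le_antisymm
  · refine sup_le le_sup_left ?_
    induction s with
    | zero => simp
    | succ s ih =>
      rw [pow_succ]
      refine (Ideal.mul_mono ih (Jn_I f).le).trans ?_
      rw [Ideal.sup_mul, Ideal.mul_sup (Ideal.span {f (Fin.last n) ^ s})]
      refine sup_le (le_trans (fun _ h => mulL h) le_sup_left) (sup_le (le_trans (fun _ h => mulL (mul_comm (Jn f n) _ ▸ h)) le_sup_left) ?_)
      rw [Ideal.span_singleton_mul_span_singleton, ← pow_succ]
      exact le_sup_right
  · refine sup_le le_sup_left (le_trans ?_ le_sup_right)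
    rw [Ideal.span_singleton_le_iff_mem]
    exact Ideal.pow_mem_pow (mem_I f _) s

theorem Jn_sup (f : Fin (n + 1) → A) (i : Fin n) (s : ℕ) :
    Jn f (i + 1) ⊔ Ideal.span (Set.range f) ^ s =
      (Jn f i ⊔ Ideal.span (Set.range f) ^ s) ⊔ Ideal.span {f i.castSucc} := by
  have hs : Jn f (i + 1) = Jn f i ⊔ Ideal.span {f i.castSucc} := Jn_succ f i.castSucc
  rw [hs, sup_right_comm]
end alg


theorem cmp_mul {e : ℤ} {g : MvPolynomial (Fin m) K} (hg : g ∈ zh m K e) (j : ℤ)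
    (c : MvPolynomial (Fin m) K) : cmp j (c * g) = cmp (j - e) c * g := by
  ext d
  rw [coeff_cmp, coeff_mul, coeff_mul]
  have key : ∀ p ∈ Finset.HasAntidiagonal.antidiagonal d, coeff p.1 (cmp (j - e) c) * coeff p.2 g =
      if (d.degree : ℤ) = j then coeff p.1 c * coeff p.2 g else 0 := by
    intro p hp
    rw [coeff_cmp]
    by_cases h0 : coeff p.2 g = 0
    · simp [h0]
    · have h1 := mem_zh.1 hg _ h0
      have h2 : (d.degree : ℤ) = p.1.degree + p.2.degree := by
        rw [← Finset.HasAntidiagonal.mem_antidiagonal.1 hp, map_add]; push_cast; rfl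
      have h3 : ((p.1.degree : ℤ) = j - e) ↔ ((d.degree : ℤ) = j) := by
        rw [h2, h1]; constructor <;> intro h <;> linarith
      simp only [h3]
      split_ifs <;> simp
  rw [Finset.sum_congr rfl key]
  split_ifs with h
  · rfl
  · simp

/-- spanned by homogeneous elements -/
def HS (J : Ideal (MvPolynomial (Fin m) K)) : Prop :=
  ∃ S : Set (MvPolynomial (Fin m) K), J = Ideal.span S ∧ ∀ g ∈ S, ∃ z, g ∈ zh m K z

theorem HS.HI {J : Ideal (MvPolynomial (Fin m) K)} (h : HS J) : HI J := by
  obtain ⟨S, rfl, hS⟩ := h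
  intro z a ha
  induction ha using Submodule.span_induction generalizing z with
  | mem g hg =>
    obtain ⟨y, hy⟩ := hS g hg
    by_cases e : y = z
    · subst e; rw [cmp_of_mem hy]; exact Ideal.subset_span hg
    · rw [cmp_of_mem_ne hy e]; exact zero_mem _
  | zero => rw [map_zero]; exact zero_mem _
  | add a b _ _ ha hb => rw [map_add]; exact add_mem (ha z) (hb z)
  | smul c a _ ha =>
    induction c using MvPolynomial.induction_on' with
    | monomial u r =>
      have hm : (monomial u r : MvPolynomial (Fin m) K) ∈ zh m K (u.degree : ℤ) := by
        rw [mem_zh]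
        intro e he
        rw [coeff_monomial] at he
        by_cases h : u = e
        · rw [h]
        · rw [if_neg h] at he; exact absurd rfl he
      rw [smul_eq_mul, mul_comm, cmp_mul hm]
      exact Ideal.mul_mem_right _ _ (ha _)
    | add p q hp hq => rw [add_smul, map_add]; exact add_mem hp hq

theorem HS.span {S : Set (MvPolynomial (Fin m) K)} (h : ∀ g ∈ S, ∃ z, g ∈ zh m K z) :
    HS (Ideal.span S) := ⟨S, rfl, h⟩

theorem HS.sup {I J : Ideal (MvPolynomial (Fin m) K)} (hI : HS I) (hJ : HS J) : HS (I ⊔ J) := by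
  obtain ⟨S, rfl, hS⟩ := hI
  obtain ⟨T, rfl, hT⟩ := hJ
  rw [← Ideal.span_union]
  exact HS.span fun g hg => hg.elim (hS g) (hT g)

theorem HS.mul {I J : Ideal (MvPolynomial (Fin m) K)} (hI : HS I) (hJ : HS J) : HS (I * J) := by
  obtain ⟨S, rfl, hS⟩ := hI
  obtain ⟨T, rfl, hT⟩ := hJ
  rw [Ideal.span_mul_span']
  refine HS.span ?_
  rintro _ ⟨a, ha, b, hb, rfl⟩
  obtain ⟨y, hy⟩ := hS a ha
  obtain ⟨z, hz⟩ := hT b hb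
  exact ⟨y + z, mul_zh hy hz⟩

theorem one_zh : (1 : MvPolynomial (Fin m) K) ∈ zh m K 0 := by
  rw [mem_zh]
  intro e he
  rw [coeff_one] at he
  by_cases h : 0 = e
  · rw [← h]; simp
  · rw [if_neg h] at he; exact absurd rfl he

theorem HS.pow {I : Ideal (MvPolynomial (Fin m) K)} (hI : HS I) (s : ℕ) : HS (I ^ s) := by
  induction s with
  | zero =>
    rw [pow_zero, Ideal.one_eq_top, ← Ideal.span_singleton_one]
    exact HS.span fun g hg => ⟨0, by rw [Set.mem_singleton_iff.1 hg]; exact one_zh⟩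
  | succ s ih => rw [pow_succ]; exact ih.mul hI

theorem pow_zh {e : ℤ} {g : MvPolynomial (Fin m) K} (hg : g ∈ zh m K e) (s : ℕ) :
    g ^ s ∈ zh m K (s * e) := by
  induction s with
  | zero => rw [pow_zero, Nat.cast_zero, zero_mul]; exact one_zh
  | succ s ih =>
    rw [pow_succ]
    have := mul_zh ih hg
    rw [show (s * e + e : ℤ) = ((s + 1 : ℕ) : ℤ) * e by push_cast; ring] at this
    exact this

theorem mk_zero_iff {J : Ideal (MvPolynomial (Fin m) K)} {a : MvPolynomial (Fin m) K} :
    Ideal.Quotient.mk J a = 0 ↔ a ∈ J := Ideal.Quotient.eq_zero_iff_mem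

theorem gses_quot {P C Q : Ideal (MvPolynomial (Fin m) K)} {e : ℤ} {g : MvPolynomial (Fin m) K}
    (hP : HI P) (hg : g ∈ zh m K e) (hC : ∀ x, x ∈ C ↔ x * g ∈ P) (hQ : Q = P ⊔ Ideal.span {g}) :
    ∃ φ ψ, GSES (L := shift e (qm C)) (M := qm P) (N := qm Q) φ ψ := by
  have hPQ : P ≤ Q := hQ ▸ le_sup_left
  have hgQ : g ∈ Q := hQ ▸ Ideal.mem_sup_right (Ideal.mem_span_singleton_self g)
  let φ : (MvPolynomial (Fin m) K ⧸ C) →ₗ[MvPolynomial (Fin m) K] (MvPolynomial (Fin m) K ⧸ P) :=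
    Submodule.mapQ C P (LinearMap.mulRight (MvPolynomial (Fin m) K) g) (fun x hx => (hC x).1 hx)
  let ψ : (MvPolynomial (Fin m) K ⧸ P) →ₗ[MvPolynomial (Fin m) K] (MvPolynomial (Fin m) K ⧸ Q) :=
    Submodule.mapQ P Q LinearMap.id (fun x hx => hPQ hx)
  refine ⟨φ, ψ, ?_, ?_, ?_, ?_, ?_, ?_⟩
  · refine (injective_iff_map_eq_zero φ).2 ?_
    intro c hc
    obtain ⟨a, rfl⟩ := Ideal.Quotient.mk_surjective c
    exact mk_zero_iff.2 ((hC a).2 (mk_zero_iff.1 hc))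
  · rintro j _ ⟨a, ha, rfl⟩
    have h1 : a * g ∈ zh m K j := by
      have := mul_zh ha hg
      rw [sub_add_cancel] at this
      exact this
    exact ⟨a * g, h1, rfl⟩
  · rintro j _ ⟨a, ha, rfl⟩
    exact ⟨a, ha, rfl⟩
  · intro c
    obtain ⟨a, rfl⟩ := Ideal.Quotient.mk_surjective (I := C) c
    exact mk_zero_iff.2 (Ideal.mul_mem_left _ a hgQ)
  · rintro j _ ⟨a, ha, rfl⟩
    exact ⟨Ideal.Quotient.mk P a, ⟨a, ha, rfl⟩, rfl⟩
  · rintro j _ ⟨a, ha, rfl⟩ h0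
    have h1 : a ∈ Q := mk_zero_iff.1 h0
    rw [hQ] at h1
    obtain ⟨p, hp, b, hb, e1⟩ := Submodule.mem_sup.1 h1
    obtain ⟨c, rfl⟩ := Ideal.mem_span_singleton'.1 hb
    have h2 : a = cmp j p + cmp (j - e) c * g := by
      rw [← cmp_mul hg, ← map_add, e1]; exact (cmp_of_mem ha).symm
    refine ⟨Ideal.Quotient.mk C (cmp (j - e) c), ⟨_, cmp_mem _ _, rfl⟩, ?_⟩
    refine Ideal.Quotient.eq.2 ?_
    change cmp (j - e) c * g - a ∈ P
    rw [h2, sub_add_cancel_right]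
    exact neg_mem (hP _ _ hp)

theorem reg_bot : regEq (qm (⊥ : Ideal (MvPolynomial (Fin m) K))) 0 := by
  let d : (Unit →₀ MvPolynomial (Fin m) K) →ₗ[MvPolynomial (Fin m) K] (qm (⊥ : Ideal (MvPolynomial (Fin m) K))).M :=
    (Submodule.mkQ (⊥ : Ideal (MvPolynomial (Fin m) K))).comp (Finsupp.lapply ())
  have h0 : ∀ f, d f = 0 → f = 0 := by
    intro f hf
    have : f () ∈ (⊥ : Ideal (MvPolynomial (Fin m) K)) := mk_zero_iff.1 hf
    refine Finsupp.ext fun k => ?_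
    rw [Subsingleton.elim k (), (Submodule.mem_bot _).1 this]; rfl
  have hd : ∀ j f, f ∈ (fr (fun _ : Unit => (0 : ℤ)) : GM m K).G j → d f ∈ (qm ⊥).G j := by
    intro j (f : Unit →₀ MvPolynomial (Fin m) K) hf
    have : f () ∈ zh m K (j - (0 : ℤ)) := hf ()
    rw [sub_zero] at this
    exact ⟨f (), this, rfl⟩
  have hs : ∀ j c, c ∈ (qm (⊥ : Ideal (MvPolynomial (Fin m) K))).G j →
      ∃ f ∈ (fr (fun _ : Unit => (0 : ℤ)) : GM m K).G j, d f = c := by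
    rintro j _ ⟨a, ha, rfl⟩
    refine ⟨(Finsupp.single () a : Unit →₀ MvPolynomial (Fin m) K), ?_, ?_⟩
    · intro k
      change (Finsupp.single () a : Unit →₀ MvPolynomial (Fin m) K) () ∈ zh m K (j - 0)
      rw [Finsupp.single_eq_same, sub_zero]; exact ha
    · change Submodule.mkQ _ ((Finsupp.single () a : Unit →₀ MvPolynomial (Fin m) K) ()) = _
      rw [Finsupp.single_eq_same]; rfl
  have hm : ∀ f, d f = 0 → ∀ k, coeff 0 (f k) = 0 := by
    intro f hf k; rw [h0 f hf]; rfl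
  constructor
  · intro i j hij
    rcases lt_trichotomy i 0 with h | rfl | h
    · exact V_neg _ _ h
    · rw [step_zero d hd hs hm]; intro k; change (0 : ℤ) ≠ j; omega
    · obtain ⟨i, rfl⟩ : ∃ i', i = i' + 1 := ⟨i - 1, by ring⟩
      rw [step_succ d hd hs hm _ _ (by omega)]
      have : Subsingleton (sub (fr (fun _ : Unit => (0 : ℤ)) : GM m K) (LinearMap.ker d)).M :=
        ⟨fun a b => Subtype.ext ((h0 _ a.2).trans (h0 _ b.2).symm)⟩
      exact V_subsingleton _ _ _
  · refine ⟨0, ?_⟩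
    rw [step_zero d hd hs hm]
    intro h
    exact h () rfl


theorem regLE.mono {N : GM m K} {c c' : ℤ} (h : regLE N c) (hc : c ≤ c') : regLE N c' :=
  fun i j hij => h i j (lt_of_le_of_lt hc hij)

theorem regEq_absurd {N : GM m K} {c : ℤ} (h : regEq N c) (h' : regLE N (c - 1)) : False := by
  obtain ⟨i, hi⟩ := h.2
  exact hi (h' i (c + i) (by linarith))

theorem aci_ne_top {A : Type*} [CommRing A] {I : Ideal A} (h : IsACI I) : I ≠ ⊤ := by
  rintro rfl
  have h1 : idealHeight (⊤ : Ideal A) = ⊤ := by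
    rw [idealHeight]
    refine iInf_eq_top.2 fun p => iInf_eq_top.2 fun hp => ?_
    exact absurd (top_le_iff.1 hp) p.2.ne_top
  have h2 := h.1
  rw [h1, top_add] at h2
  exact ENat.coe_ne_top _ h2

theorem coeff_zero_of_mem {I : Ideal (MvPolynomial (Fin m) K)} (hI : HI I) (ht : I ≠ ⊤)
    {a : MvPolynomial (Fin m) K} (ha : a ∈ I) : coeff 0 a = 0 := by
  by_contra h0
  have h1 : cmp 0 a = C (coeff 0 a) := by
    ext e
    rw [coeff_cmp, coeff_C]
    by_cases he : 0 = e
    · subst he; simp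
    · have : ¬ ((e.degree : ℤ) = 0) := by
        rw [Nat.cast_eq_zero, Finsupp.degree_eq_zero_iff]; exact fun h => he h.symm
      rw [if_neg this, if_neg he]
  have h2 := hI 0 a ha
  rw [h1] at h2
  exact ht (Ideal.eq_top_of_isUnit_mem _ h2 ((isUnit_iff_ne_zero.2 h0).map C))

theorem zh_of_hom {a : MvPolynomial (Fin m) K} {e : ℕ} (h : a ∈ homogeneousSubmodule (Fin m) K e) :
    a ∈ zh m K (e : ℤ) := by
  have : zh m K (e : ℤ) = homogeneousSubmodule (Fin m) K e := by
    simp [zh, zg]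
  rw [this]; exact h

theorem eq_zero_of_deg {I : Ideal (MvPolynomial (Fin m) K)} (hI : HI I) (ht : I ≠ ⊤)
    {a : MvPolynomial (Fin m) K} (ha : a ∈ I) (h : a ∈ zh m K 0) : a = 0 := by
  ext e
  rw [coeff_zero]
  by_contra h0
  have h1 := mem_zh.1 h e h0
  rw [Nat.cast_eq_zero, Finsupp.degree_eq_zero_iff] at h1
  rw [h1] at h0
  exact h0 (coeff_zero_of_mem hI ht ha)

section main
variable {n : ℕ} {d : Fin (n + 1) → ℕ} {f : Fin (n + 1) → MvPolynomial (Fin m) K}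

theorem HS_Jn (hf : ∀ l, f l ∈ zh m K (d l : ℤ)) (i : ℕ) : HS (Jn f i) := by
  refine HS.span ?_
  rintro _ ⟨j, _, rfl⟩
  exact ⟨_, hf j⟩

theorem HS_I (hf : ∀ l, f l ∈ zh m K (d l : ℤ)) : HS (Ideal.span (Set.range f)) := by
  rw [← Jn_top]; exact HS_Jn hf _

theorem ci_reg (hf : ∀ l, f l ∈ zh m K (d l : ℤ)) (hrs : IsRegSeq (f ∘ Fin.castSucc))
    (hpos : ∀ l : Fin n, 1 ≤ d l.castSucc) (i : ℕ) (hi : i ≤ n) :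
    regEq (qm (Jn f i)) (∑ l : Fin i, ((d ⟨l, by omega⟩ : ℤ) - 1)) := by
  induction i with
  | zero =>
    rw [Jn_zero, Fin.sum_univ_zero]; exact reg_bot
  | succ i ih =>
    have ih := ih (by omega)
    obtain ⟨φ, ψ, h⟩ := gses_quot (P := Jn f i) (C := Jn f i) (Q := Jn f (i + 1))
      (HS_Jn hf i).HI (hf ⟨i, by omega⟩)
      (fun x => ⟨fun h => Ideal.mul_mem_right _ _ h, fun h => rseq hrs ⟨i, hi⟩ h⟩)
      (Jn_succ f ⟨i, by omega⟩)
    have hp := hpos ⟨i, hi⟩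
    have hp' : (1 : ℤ) ≤ d ⟨i, by omega⟩ := by exact_mod_cast hp
    rw [Fin.sum_univ_castSucc]
    refine regE2 h ?_ (ih.1.mono ?_)
    · rw [regEq_shift]
      convert ih using 1
      simp only [Fin.val_castSucc, Fin.val_last]
      ring
    · simp only [Fin.val_castSucc, Fin.val_last]
      linarith

theorem main_reg (hf : ∀ l, f l ∈ zh m K (d l : ℤ)) (ht : Ideal.span (Set.range f) ≠ ⊤)
    (hd : IsDSequence f) (hrs : IsRegSeq (f ∘ Fin.castSucc)) {r : ℤ}
    (hr : r = (∑ l : Fin n, (d (Fin.castSucc l) : ℤ)) - (n : ℤ))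
    (hI : regLE (qm (Ideal.span (Set.range f))) (r - 1))
    (hmax : ∀ l, d l ≤ d (Fin.last n)) (s k : ℕ) (hk : k ≤ n) :
    regEq (qm (Jn f (n - k) ⊔ Ideal.span (Set.range f) ^ (s + 2)))
      (r + (s + 1) * (d (Fin.last n) : ℤ) - 1) := by
  have hz : ∀ l, d l = 0 → f l = 0 := by
    intro l hl
    refine eq_zero_of_deg (HS_I hf).HI ht (mem_I f l) ?_
    have := hf l
    rw [hl] at this
    exact this
  have hpos : ∀ l : Fin n, 1 ≤ d l.castSucc := by
    intro l
    by_contra h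
    have h0 := hz l.castSucc (by omega)
    have h1 : (1 : MvPolynomial (Fin m) K) ∈ Jn f l :=
      rseq hrs l (by rw [h0, mul_zero]; exact zero_mem _)
    exact ht ((Ideal.eq_top_iff_one _).2 (Jn_le f l h1))
  have hJ : regEq (qm (Jn f n)) r := by
    have := ci_reg hf hrs hpos n le_rfl
    rw [Finset.sum_sub_distrib] at this
    have e : (∑ _l : Fin n, (1 : ℤ)) = n := by simp
    rw [e] at this
    rw [hr]
    exact this
  have hn : (1 : ℤ) ≤ d (Fin.last n) := by
    by_contra h
    have h0 := hz (Fin.last n) (by omega)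
    have h1 := Jn_I f
    rw [h0, Ideal.span_singleton_zero, sup_bot_eq] at h1
    rw [h1] at hI
    exact regEq_absurd hJ hI
  let C : Ideal (MvPolynomial (Fin m) K) :=
    Submodule.comap (LinearMap.mulRight (MvPolynomial (Fin m) K) (f (Fin.last n))) (Jn f n)
  have hC : ∀ x, x ∈ C ↔ x * f (Fin.last n) ∈ Jn f n := fun x => Iff.rfl
  have hCr : regEq (qm C) (r - d (Fin.last n)) := by
    obtain ⟨φ, ψ, h⟩ := gses_quot (HS_Jn hf n).HI (hf (Fin.last n)) hC (Jn_I f)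
    exact regEq_shift.1 (regE1 h hJ hI)
  have step : ∀ s : ℕ, (∀ i : Fin n, regLE (qm (Jn f i ⊔ Ideal.span (Set.range f) ^ (s + 1)))
      (r + s * (d (Fin.last n) : ℤ) - 1)) → ∀ k ≤ n,
      regEq (qm (Jn f (n - k) ⊔ Ideal.span (Set.range f) ^ (s + 2)))
        (r + (s + 1) * (d (Fin.last n) : ℤ) - 1) := by
    intro s hs k
    induction k with
    | zero =>
      intro _
      rw [Nat.sub_zero]
      obtain ⟨φ, ψ, h⟩ := gses_quot (HS_Jn hf n).HI (pow_zh (hf (Fin.last n)) (s + 2))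
        (fun x => (hC x).trans (colonN hd (s + 1) x)) (Jn_pow f (s + 2))
      refine regE2 h ?_ (hJ.1.mono ?_)
      · rw [regEq_shift]
        convert hCr using 1
        push_cast
        ring
      · have : (0 : ℤ) ≤ (s : ℤ) * d (Fin.last n) := by positivity
        linarith
    | succ k ih =>
      intro hk
      have ih := ih (by omega)
      obtain ⟨i, hi⟩ : ∃ i : Fin n, (i : ℕ) = n - (k + 1) := ⟨⟨n - (k + 1), by omega⟩, rfl⟩
      rw [← hi]
      rw [show n - k = i + 1 by omega] at ih
      obtain ⟨φ, ψ, h⟩ := gses_quot ((HS_Jn hf i).sup ((HS_I hf).pow (s + 2))).HI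
        (hf i.castSucc) (colonS hd hrs i s) (Jn_sup f i (s + 2))
      refine regE3 h ih ?_
      rw [regLE_shift]
      refine (hs i).mono ?_
      have : (d i.castSucc : ℤ) ≤ d (Fin.last n) := by exact_mod_cast hmax _
      linarith
  induction s generalizing k with
  | zero =>
    refine step 0 ?_ k hk
    intro i
    rw [zero_add, pow_one, sup_eq_right.2 (Jn_le f i)]
    simpa using hI
  | succ s ihs =>
    refine step (s + 1) ?_ k hk
    intro i
    have := (ihs (n - i) (by omega)).1
    rw [show n - (n - (i : ℕ)) = i by omega] at this
    push_cast
    exact this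
end main

end RPA

/-- Theorem 2.4: let `I` be a homogeneous almost complete intersection in a standard graded
polynomial ring over an infinite field, generated by a homogeneous d-sequence
`f_1,…,f_n` (indexed here by `Fin (n+1)`, the paper's `n` being `n+1`) whose first terms
form a regular sequence, with `reg(A/I) < ∑_{l<n} d_l - n + 1` and `d_n` maximal.
Then for all `s ≥ 2` and all `i = 0,…,n-1`,
`reg (A/(⟨f_1,…,f_i⟩ + I^s)) = (∑ d_l) - n + (s-2) d_n`. -/
theorem reg_powers_aci (K : Type) [Field K] [Infinite K] (m n : ℕ)
    (d : Fin (n + 1) → ℕ) (f : Fin (n + 1) → MvPolynomial (Fin m) K)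
    (I : Ideal (MvPolynomial (Fin m) K)) (hACI : IsACI I)
    (hhom : ∀ l, f l ∈ MvPolynomial.homogeneousSubmodule (Fin m) K (d l))
    (hI : I = Ideal.span (Set.range f))
    (hd : IsDSequence f) (hrs : IsRegSeq (f ∘ Fin.castSucc))
    (hregI : ∀ RI : MinGradedFreeRes K (MvPolynomial (Fin m) K)
        (zg (MvPolynomial.homogeneousSubmodule (Fin m) K))
        (irrel (MvPolynomial.homogeneousSubmodule (Fin m) K))
        (MvPolynomial (Fin m) K ⧸ I)
        (quotPieces (MvPolynomial.homogeneousSubmodule (Fin m) K) I),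
      RI.reg < (∑ l : Fin n, (d (Fin.castSucc l) : ℤ)) - (n : ℤ))
    (hmax : ∀ l, d l ≤ d (Fin.last n)) :
    ∀ s : ℕ, 2 ≤ s → ∀ i : ℕ, i ≤ n →
    ∀ R : MinGradedFreeRes K (MvPolynomial (Fin m) K)
        (zg (MvPolynomial.homogeneousSubmodule (Fin m) K))
        (irrel (MvPolynomial.homogeneousSubmodule (Fin m) K))
        (MvPolynomial (Fin m) K ⧸ (Ideal.span (f '' {j | (j : ℕ) < i}) + I ^ s))
        (quotPieces (MvPolynomial.homogeneousSubmodule (Fin m) K) (Ideal.span (f '' {j | (j : ℕ) < i}) + I ^ s)),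
      R.reg = (∑ l, (d l : ℤ)) - ((n : ℤ) + 1) + ((s : ℤ) - 2) * (d (Fin.last n) : ℤ) := by
  subst hI
  have hf : ∀ l, f l ∈ RPA.zh m K (d l : ℤ) := fun l => RPA.zh_of_hom (hhom l)
  have ht := RPA.aci_ne_top hACI
  obtain ⟨RI⟩ := RPA.exists_res _ (RPA.HS_I hf).HI
    (fun a ha => RPA.coeff_zero_of_mem (RPA.HS_I hf).HI ht ha)
  have hI := RPA.regLE_of_reg RI (RPA.HS_I hf).HI (hregI RI)
  intro s hs i hi R
  obtain ⟨s, rfl⟩ : ∃ s', s = s' + 2 := ⟨s - 2, by omega⟩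
  have h := RPA.main_reg hf ht hd hrs rfl hI hmax s (n - i) (by omega)
  rw [show n - (n - i) = i by omega] at h
  have h2 := RPA.reg_of_regEq R
    ((RPA.HS_Jn hf i).sup ((RPA.HS_I hf).pow (s + 2))).HI h
  rw [h2, Fin.sum_univ_castSucc]
  push_cast
  ring
end

section
/- Let I be a homogeneous almost complete intersection ideal in a polynomial ring over an infinite field K, with height n. Then I admits a generating set of n + 1 homogeneous elements f_1, ..., f_{n+1} forming a d-sequence such that f_1, ..., f_n is a regular sequence. -/
open Ideal

attribute [local instance] MvPolynomial.gradedAlgebra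


section LocalPart
open RingTheory.Sequence IsLocalRing CategoryTheory Abelian Pointwise

/-- If `p` is associated to `M` and `x` is regular on `M`, some associated prime of `M/xM`
contains `p` and `x`. -/
lemma aux_ass_step {R : Type*} [CommRing R] [IsLocalRing R] [IsNoetherianRing R]
    {M : Type*} [AddCommGroup M] [Module R M] [Module.Finite R M] {x : R}
    (hx : x ∈ maximalIdeal R) (reg : IsSMulRegular M x) {Q : Ideal R}
    (hQ : Q ∈ associatedPrimes R M) :
    ∃ q ∈ associatedPrimes R (QuotSMulTop x M), Q ≤ q ∧ x ∈ q := by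
  have hQ' : IsAssociatedPrime Q M := hQ
  rw [isAssociatedPrime_iff] at hQ'
  obtain ⟨hp, y, hy⟩ := hQ'
  let N : Submodule R M := Submodule.torsionBySet R M Q
  have hN : ∀ z, z ∈ N ↔ ∀ r ∈ Q, r • z = 0 := by
    intro z; simp [N, Submodule.mem_torsionBySet_iff]
  have hyN : y ∈ N := by
    rw [hN]; intro r hr
    rw [hy, Submodule.mem_colon_singleton] at hr
    simpa using hr
  have hy0 : y ≠ 0 := by
    rintro rfl
    apply hp.ne_top
    rw [hy]; simp
  have hnot : ¬ N ≤ x • (⊤ : Submodule R M) := by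
    intro hle
    have : N ≤ maximalIdeal R • N := by
      intro z hz
      obtain ⟨w, -, rfl⟩ := hle hz
      have hw : w ∈ N := by
        rw [hN] at hz ⊢
        intro r hr
        have := hz r hr
        apply reg
        change x • (r • w) = x • (0 : M)
        rw [smul_zero, smul_comm]
        exact this
      exact Submodule.smul_mem_smul hx hw
    have := Submodule.eq_bot_of_le_smul_of_le_jacobson_bot _ N (IsNoetherian.noetherian N) this
      (IsLocalRing.maximalIdeal_le_jacobson _)
    rw [this] at hyN
    exact hy0 (by simpa using hyN)
  obtain ⟨z, hzN, hz⟩ := Set.not_subset.mp hnot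
  have hz0 : (Submodule.Quotient.mk z : QuotSMulTop x M) ≠ 0 := by
    rw [Ne, Submodule.Quotient.mk_eq_zero]; exact hz
  obtain ⟨q, hq, hle⟩ := exists_le_isAssociatedPrime_of_isNoetherianRing R _ hz0
  refine ⟨q, hq, ?_, ?_⟩
  · intro r hr
    apply hle
    rw [Submodule.mem_colon_singleton, ← Submodule.Quotient.mk_smul, ((hN z).1 hzN) r hr]
    simp
  · apply hle
    rw [Submodule.mem_colon_singleton, ← Submodule.Quotient.mk_smul, Submodule.mem_bot,
      Submodule.Quotient.mk_eq_zero]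
    exact Submodule.smul_mem_pointwise_smul _ _ _ trivial

lemma aux_coheight {R : Type*} [CommRing R] [IsLocalRing R] [IsNoetherianRing R]
    (rs : List R) : ∀ {M : Type*} [AddCommGroup M] [Module R M] [Module.Finite R M]
    (_ : ∀ r ∈ rs, r ∈ maximalIdeal R) (_ : IsWeaklyRegular M rs) (Q : PrimeSpectrum R)
    (_ : Q.asIdeal ∈ associatedPrimes R M), (rs.length : ℕ∞) ≤ Order.coheight Q := by
  induction rs with
  | nil => intros; simp
  | cons x rs ih =>
    intro M _ _ _ hm hreg Q hQ
    rw [isWeaklyRegular_cons_iff] at hreg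
    obtain ⟨q, hq, hle, hxq⟩ := aux_ass_step (hm x (by simp)) hreg.1 hQ
    have h1 := ih (M := QuotSMulTop x M) (fun r hr => hm r (by simp [hr])) hreg.2
      ⟨q, IsAssociatedPrime.isPrime hq⟩ hq
    have hxQ : x ∉ Q.asIdeal := by
      intro hxQ
      have : x ∈ ⋃ p ∈ associatedPrimes R M, (p : Set R) := Set.mem_biUnion hQ hxQ
      rw [biUnion_associatedPrimes_eq_compl_regular] at this
      exact this hreg.1
    have hlt : Q < ⟨q, IsAssociatedPrime.isPrime hq⟩ :=
      lt_of_le_not_ge hle fun h => hxQ (h hxq)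
    have := Order.coheight_add_one_le hlt
    push_cast [List.length_cons]
    exact (add_le_add_left h1 1).trans this

universe u
lemma aux_ext {R : Type u} [CommRing R] [IsLocalRing R] [IsNoetherianRing R] (j : ℕ)
    (rs : List R) : ∀ (M : ModuleCat.{u} R) [Module.Finite R M] [Nontrivial M]
    (_ : ∀ r ∈ rs, r ∈ maximalIdeal R) (_ : IsWeaklyRegular M rs)
    (_ : ∀ i < rs.length + j, Subsingleton (Ext (ModuleCat.of R (R ⧸ maximalIdeal R)) M i))
    (Q : PrimeSpectrum R)
    (_ : Q.asIdeal ∈ associatedPrimes R (M ⧸ (ofList rs • ⊤ : Submodule R M))),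
    (j : ℕ∞) ≤ Order.coheight Q := by
  induction rs with
  | nil =>
    intro M _ _ _ _ hext Q hQ
    have hlt : maximalIdeal R • (⊤ : Submodule R M) < ⊤ := by
      rw [lt_top_iff_ne_top]
      intro h
      have := Submodule.eq_bot_of_le_smul_of_le_jacobson_bot (maximalIdeal R)
        (⊤ : Submodule R M) (IsNoetherian.noetherian _) h.ge
        (IsLocalRing.maximalIdeal_le_jacobson _)
      exact absurd this top_ne_bot
    obtain ⟨rs, hlen, hmem, hreg⟩ := ModuleCat.exists_isRegular_of_exists_subsingleton_ext
      (maximalIdeal R) j M hlt (ModuleCat.of R (R ⧸ maximalIdeal R))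
      (by rw [Module.support_eq_zeroLocus]; exact congrArg _ (congrArg _ Ideal.annihilator_quotient))
      (by simpa using hext)
    rw [← hlen]
    refine aux_coheight rs (M := M) hmem hreg.toIsWeaklyRegular Q ?_
    rw [LinearEquiv.AssociatedPrimes.eq (Submodule.quotEquivOfEqBot (ofList ([] : List R) • (⊤ : Submodule R M)) (by simp))] at hQ
    exact hQ
  | cons x rs ih =>
    intro M _ _ hm hreg hext Q hQ
    rw [isWeaklyRegular_cons_iff] at hreg
    have : Nontrivial (QuotSMulTop x M) :=
      nontrivial_quotSMulTop_of_mem_maximalIdeal _ (hm x (by simp))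
    refine ih (ModuleCat.of R (QuotSMulTop x M)) (fun r hr => hm r (by simp [hr])) hreg.2 ?_ Q ?_
    · intro i hi
      have zero1 := AddCommGrpCat.isZero_of_iff_subsingleton.mpr
        (hext i (by simp only [List.length_cons]; omega))
      have zero2 := AddCommGrpCat.isZero_of_iff_subsingleton.mpr
        (hext (i + 1) (by simp only [List.length_cons]; omega))
      exact AddCommGrpCat.subsingleton_of_isZero <| ShortComplex.Exact.isZero_of_both_zeros
        ((Ext.covariant_sequence_exact₃' _ hreg.1.smulShortComplex_shortExact) i (i + 1) rfl)
        (zero1.eq_zero_of_src _) (zero2.eq_zero_of_tgt _)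
    · rw [LinearEquiv.AssociatedPrimes.eq (Submodule.quotOfListConsSMulTopEquivQuotSMulTopInner M x rs)] at hQ
      exact hQ

lemma aux_len {R : Type*} [CommRing R] [IsLocalRing R] [IsNoetherianRing R]
    (rs : List R) (hm : ∀ r ∈ rs, r ∈ maximalIdeal R) (hreg : IsWeaklyRegular R rs) :
    (rs.length : WithBot ℕ∞) ≤ ringKrullDim R := by
  have hr : IsRegular R rs := .of_isWeaklyRegular_of_mem_maximalIdeal _ hm hreg
  rw [← ringKrullDim_add_length_eq_ringKrullDim_of_isRegular rs hr]
  have : Nontrivial (R ⧸ ofList rs) := Ideal.Quotient.nontrivial_iff.2 (by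
    intro h
    exact hr.top_ne_smul (by simp [h]))
  have h0 : (0 : WithBot ℕ∞) ≤ ringKrullDim (R ⧸ ofList rs) := ringKrullDim_nonneg_of_nontrivial
  exact le_add_of_nonneg_left h0

/-- Unmixedness in a Cohen-Macaulay local ring. -/
lemma aux_unmixed {R : Type u} [CommRing R] [IsLocalRing R] [IsNoetherianRing R]
    (xs : List R) (hxm : ∀ r ∈ xs, r ∈ maximalIdeal R) (hxs : IsWeaklyRegular R xs)
    (hdim : ringKrullDim R ≤ xs.length)
    (rs : List R) (hm : ∀ r ∈ rs, r ∈ maximalIdeal R) (hreg : IsWeaklyRegular R rs)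
    (Q : Ideal R)
    (hQ : Q ∈ associatedPrimes R (R ⧸ (ofList rs • ⊤ : Submodule R R))) :
    Q.height ≤ rs.length := by
  have hp : Q.IsPrime := IsAssociatedPrime.isPrime hQ
  have hlt : maximalIdeal R • (⊤ : Submodule R R) < ⊤ := by
    simpa using (IsLocalRing.maximalIdeal.isMaximal R).ne_top.lt_top
  have hle : rs.length ≤ xs.length := by
    exact_mod_cast (aux_len rs hm hreg).trans hdim
  have hE := ModuleCat.subsingleton_ext_of_exists_isRegular (maximalIdeal R)
    (ModuleCat.of R (R ⧸ maximalIdeal R))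
    (by rw [Module.support_eq_zeroLocus]; exact (congrArg _ (congrArg _ Ideal.annihilator_quotient)).le)
    (ModuleCat.of R R) hlt xs hxm (.of_isWeaklyRegular_of_mem_maximalIdeal _ hxm hxs)
  have h1 := aux_ext (xs.length - rs.length) rs (ModuleCat.of R R) hm hreg
    (by rw [Nat.add_sub_cancel' hle]; exact hE) ⟨Q, hp⟩ hQ
  have h2 : (Order.height (⟨Q, hp⟩ : PrimeSpectrum R) + Order.coheight (⟨Q, hp⟩ : PrimeSpectrum R) : ℕ∞) ≤ xs.length := by
    have h3 : ((Order.height (⟨Q, hp⟩ : PrimeSpectrum R) + Order.coheight (⟨Q, hp⟩ : PrimeSpectrum R) : ℕ∞) : WithBot ℕ∞) ≤ ringKrullDim R := by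
      rw [ringKrullDim, Order.krullDim_eq_iSup_height_add_coheight_of_nonempty]
      exact WithBot.coe_le_coe.2 (le_iSup (fun a : PrimeSpectrum R => Order.height a + Order.coheight a) _)
    exact_mod_cast h3.trans hdim
  rw [PrimeSpectrum.height_eq_orderHeight ⟨Q, hp⟩]
  have h4 := (add_le_add_right h1 _).trans h2
  have : ((xs.length : ℕ) : ℕ∞) = rs.length + (xs.length - rs.length : ℕ) := by
    exact_mod_cast (Nat.add_sub_cancel' hle).symm
  rw [this] at h4
  exact (ENat.add_le_add_iff_right (ENat.natCast_ne_top _)).1 h4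
end LocalPart

section Steinitz
open IsLocalRing

lemma aux_steinitz {L : Type*} [CommRing L] [IsLocalRing L] {r : ℕ} (T : Ideal L)
    (S : Fin (r + 1) → L) (𝔞 : Ideal L) (h𝔞 : 𝔞 = T ⊔ span (Set.range S)) {x : L}
    (hx : x ∈ 𝔞) (hx' : x ∉ T ⊔ maximalIdeal L * 𝔞) :
    ∃ S' : Fin r → L, 𝔞 = (T ⊔ span {x}) ⊔ span (Set.range S') := by
  have hx0 := hx
  rw [h𝔞, Submodule.mem_sup] at hx
  obtain ⟨t, ht, y, hy, rfl⟩ := hx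
  obtain ⟨c, rfl⟩ := (Ideal.mem_span_range_iff_exists_fun).1 hy
  have hSmem : ∀ j, S j ∈ 𝔞 := fun j => by
    rw [h𝔞]; exact Ideal.mem_sup_right (subset_span ⟨j, rfl⟩)
  have : ∃ j, c j ∉ maximalIdeal L := by
    by_contra! hc
    exact hx' (add_mem (Ideal.mem_sup_left ht) (Ideal.mem_sup_right
      (sum_mem fun j _ => Ideal.mul_mem_mul (hc j) (hSmem j))))
  obtain ⟨j, hj⟩ := this
  have hu : IsUnit (c j) := by simpa using hj
  obtain ⟨u, hu⟩ := hu.exists_left_inv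
  refine ⟨fun i => S (j.succAbove i), le_antisymm ?_ ?_⟩
  · have hS' : ∀ i, S (j.succAbove i) ∈ (T ⊔ span {t + ∑ i, c i * S i}) ⊔
      span (Set.range fun i => S (j.succAbove i)) := fun i =>
        Ideal.mem_sup_right (subset_span ⟨i, rfl⟩)
    have hT : T ≤ (T ⊔ span {t + ∑ i, c i * S i}) ⊔
      span (Set.range fun i => S (j.succAbove i)) := le_sup_left.trans le_sup_left
    have hX : t + ∑ i, c i * S i ∈ (T ⊔ span {t + ∑ i, c i * S i}) ⊔
      span (Set.range fun i => S (j.succAbove i)) :=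
      Ideal.mem_sup_left (Ideal.mem_sup_right (mem_span_singleton_self _))
    have hSj : S j ∈ (T ⊔ span {t + ∑ i, c i * S i}) ⊔
      span (Set.range fun i => S (j.succAbove i)) := by
      generalize (T ⊔ span {t + ∑ i, c i * S i}) ⊔
        span (Set.range fun i => S (j.succAbove i)) = B at *
      rw [Fin.sum_univ_succAbove _ j] at hX
      have h1 : ∑ i, c (j.succAbove i) * S (j.succAbove i) ∈ B :=
        sum_mem fun i _ => B.mul_mem_left _ (hS' i)
      have h2 := sub_mem (sub_mem hX (hT ht)) h1
      have h3 := B.mul_mem_left u h2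
      convert h3 using 1
      linear_combination (- S j) * hu
    nth_rewrite 1 [h𝔞]
    refine sup_le hT (span_le.2 ?_)
    rintro _ ⟨i, rfl⟩
    rcases Fin.eq_self_or_eq_succAbove j i with rfl | ⟨i, rfl⟩
    · exact hSj
    · exact hS' i
  · refine sup_le (sup_le (by rw [h𝔞]; exact le_sup_left) ?_) (span_le.2 ?_)
    · rw [span_singleton_le_iff_mem]; exact hx0
    · rintro _ ⟨i, rfl⟩; exact hSmem _

lemma aux_nakayama {L : Type*} [CommRing L] [IsLocalRing L] [IsNoetherianRing L]
    {T 𝔞 : Ideal L} (h : 𝔞 ≤ T ⊔ maximalIdeal L * 𝔞) : 𝔞 ≤ T :=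
  Submodule.le_of_le_smul_of_le_jacobson_bot (IsNoetherian.noetherian _)
    (IsLocalRing.maximalIdeal_le_jacobson _) h

lemma aux_select {L : Type*} [CommRing L] [IsLocalRing L] [IsNoetherianRing L]
    (S : Set L) (𝔞 : Ideal L) (r : ℕ) : ∀ (T : Ideal L) (g : Fin r → L),
    𝔞 = T ⊔ span (Set.range g) → 𝔞 = T ⊔ span S →
    ∃ h : Fin r → L, (∀ i, h i ∈ insert 0 S) ∧ 𝔞 = T ⊔ span (Set.range h) := by
  induction r with
  | zero => intro T g hg _; exact ⟨g, fun i => i.elim0, hg⟩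
  | succ r ih =>
    intro T g hg hS
    by_cases hle : 𝔞 ≤ T ⊔ maximalIdeal L * 𝔞
    · have := aux_nakayama hle
      refine ⟨fun _ => 0, by simp, le_antisymm (this.trans le_sup_left) (sup_le ?_ ?_)⟩
      · rw [hg]; exact le_sup_left
      · rw [span_le]; rintro _ ⟨i, rfl⟩; simp
    · have : ∃ s ∈ S, s ∉ T ⊔ maximalIdeal L * 𝔞 := by
        by_contra! hc
        apply hle
        nth_rewrite 1 [hS]
        exact sup_le le_sup_left (span_le.2 hc)
      obtain ⟨s, hs, hs'⟩ := this
      have hs𝔞 : s ∈ 𝔞 := by rw [hS]; exact Ideal.mem_sup_right (subset_span hs)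
      obtain ⟨g', hg'⟩ := aux_steinitz T g 𝔞 hg hs𝔞 hs'
      obtain ⟨h, hh, hh'⟩ := ih (T ⊔ span {s}) g' hg' (le_antisymm
        (by nth_rewrite 1 [hS]; exact sup_le_sup_right le_sup_left _)
        (sup_le (sup_le (by rw [hS]; exact le_sup_left)
          ((span_singleton_le_iff_mem _).2 hs𝔞)) (by rw [hS]; exact le_sup_right)))
      refine ⟨Fin.cons s h, ?_, ?_⟩
      · intro i
        refine Fin.cases ?_ ?_ i
        · simp [hs]
        · intro i; simpa using hh i
      · rw [hh', Fin.range_cons, Set.insert_eq, span_union, sup_assoc]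
end Steinitz

section Avoid
lemma aux_avoid {K A ι : Type*} [Field K] [Infinite K] [AddCommGroup A] [Module K A] [Finite ι]
    (W : Submodule K A) (N : ι → Submodule K A) (h : ∀ i, ∃ w ∈ W, w ∉ N i) :
    ∃ w ∈ W, ∀ i, w ∉ N i := by
  by_contra! hc
  obtain ⟨i, hi⟩ := Subspace.exists_eq_top_of_iUnion_eq_univ (k := K)
    (p := fun i => (N i).comap W.subtype) (by
      rw [Set.eq_univ_iff_forall]
      rintro ⟨w, hw⟩
      obtain ⟨i, hi⟩ := hc w hw
      exact Set.mem_iUnion.2 ⟨i, hi⟩)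
  obtain ⟨w, hw, hw'⟩ := h i
  have : (⟨w, hw⟩ : W) ∈ (N i).comap W.subtype := by rw [hi]; trivial
  exact hw' this
end Avoid

section PolyPart
open RingTheory.Sequence IsLocalRing MvPolynomial

noncomputable abbrev auxM (m : ℕ) (K : Type*) [Field K] : Ideal (MvPolynomial (Fin m) K) :=
  RingHom.ker (constantCoeff (R := K) (σ := Fin m))

instance auxM_prime (m : ℕ) (K : Type*) [Field K] : (auxM m K).IsPrime := RingHom.ker_isPrime _

noncomputable abbrev auxR (m : ℕ) (K : Type*) [Field K] := Localization.AtPrime (auxM m K)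

variable {K : Type*} [Field K] {m : ℕ}

lemma aux_comp_mul {a b : MvPolynomial (Fin m) K} {i j : ℕ}
    (hb : b ∈ homogeneousSubmodule (Fin m) K j) :
    homogeneousComponent (i + j) (a * b) = homogeneousComponent i a * b := by
  have := DirectSum.coe_decompose_mul_add_of_right_mem (homogeneousSubmodule (Fin m) K)
    (i := i) (a := a) hb
  rw [← decomposition.decompose'_apply, ← decomposition.decompose'_apply]
  exact this

lemma aux_comp_mem {J : Ideal (MvPolynomial (Fin m) K)}
    (hJ : J.IsHomogeneous (homogeneousSubmodule (Fin m) K)) {p : MvPolynomial (Fin m) K}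
    (hp : p ∈ J) (i : ℕ) : homogeneousComponent i p ∈ J := by
  rw [← decomposition.decompose'_apply]
  exact hJ i hp

lemma aux_mem_of_comp {J : Ideal (MvPolynomial (Fin m) K)} {p : MvPolynomial (Fin m) K}
    (hp : ∀ i, homogeneousComponent i p ∈ J) : p ∈ J := by
  rw [← sum_homogeneousComponent p]
  exact Ideal.sum_mem _ fun i _ => hp i

lemma aux_M_le : auxM m K ≤ span (Set.range (X : Fin m → MvPolynomial (Fin m) K)) := by
  intro x hx
  rw [← Set.image_univ, mem_ideal_span_X_image]
  intro s hs
  by_contra! hc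
  have : s = 0 := by ext i; simpa using hc i
  subst this
  rw [mem_support_iff] at hs
  exact hs hx

lemma aux_exists_X {P : Ideal (MvPolynomial (Fin m) K)} (h : ¬ auxM m K ≤ P) :
    ∃ l : Fin m, X l ∉ P := by
  by_contra! hc
  exact h (aux_M_le.trans (span_le.2 (by rintro _ ⟨l, rfl⟩; exact hc l)))

lemma aux_le_M {I : Ideal (MvPolynomial (Fin m) K)}
    (hI : I.IsHomogeneous (homogeneousSubmodule (Fin m) K)) (h : I ≠ ⊤) : I ≤ auxM m K := by
  intro x hx
  by_contra hc
  apply h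
  have := aux_comp_mem hI hx 0
  rw [homogeneousComponent_zero] at this
  refine Ideal.eq_top_of_isUnit_mem _ this ?_
  exact (IsUnit.mk0 _ (by simpa [RingHom.mem_ker, constantCoeff_eq] using hc)).map C

/-- homogeneous elements descend from the localization at the irrelevant ideal -/
lemma aux_descend {J : Ideal (MvPolynomial (Fin m) K)}
    (hJ : J.IsHomogeneous (homogeneousSubmodule (Fin m) K)) {a : MvPolynomial (Fin m) K} {d : ℕ}
    (ha : a ∈ homogeneousSubmodule (Fin m) K d)
    (h : algebraMap _ (auxR m K) a ∈ J.map (algebraMap _ (auxR m K))) : a ∈ J := by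
  rw [IsLocalization.algebraMap_mem_map_algebraMap_iff (auxM m K).primeCompl] at h
  obtain ⟨s, hs, hsa⟩ := h
  have := aux_comp_mem hJ hsa (0 + d)
  rw [aux_comp_mul ha, homogeneousComponent_zero] at this
  have hu : IsUnit (C (coeff 0 s) : MvPolynomial (Fin m) K) :=
    (IsUnit.mk0 _ (by
      have : s ∉ auxM m K := hs
      simpa [RingHom.mem_ker, constantCoeff_eq] using this)).map C
  exact (Ideal.unit_mul_mem_iff_mem J hu).1 this

lemma aux_X_reg : IsWeaklyRegular (MvPolynomial (Fin m) K)
    (List.ofFn (X : Fin m → MvPolynomial (Fin m) K)) := by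
  rw [isWeaklyRegular_iff]
  intro i hi
  have hi' : i < m := by simpa using hi
  have hspan : (Ideal.ofList (List.take i (List.ofFn (X : Fin m → MvPolynomial (Fin m) K))) • ⊤ :
      Submodule (MvPolynomial (Fin m) K) (MvPolynomial (Fin m) K)) =
      span (X '' {j : Fin m | j.1 < i}) := by
    rw [smul_eq_mul, Ideal.mul_top, Ideal.ofList]
    congr 1
    ext y
    simp only [Set.mem_ofPred_eq, List.mem_take_iff_getElem, Set.mem_image, List.getElem_ofFn]
    constructor
    · rintro ⟨j, hj, rfl⟩
      simp at hj
      exact ⟨⟨j, hj.2⟩, hj.1, rfl⟩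
    · rintro ⟨j, hj, rfl⟩
      exact ⟨j, by simp [hj], rfl⟩
  rw [hspan, isSMulRegular_iff_right_eq_zero_of_smul]
  intro y hy
  obtain ⟨y, rfl⟩ := Submodule.Quotient.mk_surjective _ y
  rw [← Submodule.Quotient.mk_smul, Submodule.Quotient.mk_eq_zero] at hy
  rw [Submodule.Quotient.mk_eq_zero]
  rw [mem_ideal_span_X_image] at hy ⊢
  intro s hs
  obtain ⟨j, hj, hne⟩ := hy (s + Finsupp.single ⟨i, hi'⟩ 1) (by
    rw [mem_support_iff] at hs ⊢
    simpa [smul_eq_mul, mul_comm (X _), coeff_mul_X] using hs)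
  refine ⟨j, hj, ?_⟩
  have : j ≠ ⟨i, hi'⟩ := by rintro rfl; simp at hj
  simpa [Finsupp.single_apply, this.symm] using hne

lemma aux_dimR : ringKrullDim (auxR m K) ≤ m := by
  rw [IsLocalization.AtPrime.ringKrullDim_eq_height (auxM m K) (auxR m K)]
  refine Ideal.height_le_ringKrullDim_of_isPrime.trans ?_
  rw [MvPolynomial.ringKrullDim_of_isNoetherianRing]
  simp

/-- unmixedness -/
lemma aux_ass_height (rs : List (MvPolynomial (Fin m) K)) (hm : ∀ r ∈ rs, r ∈ auxM m K)
    (hreg : IsWeaklyRegular (auxR m K) (rs.map (algebraMap _ (auxR m K)))) (Q : Ideal (auxR m K))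
    (hQ : Q ∈ associatedPrimes (auxR m K)
      (auxR m K ⧸ (Ideal.map (algebraMap _ (auxR m K)) (Ideal.ofList rs)))) :
    (Q.comap (algebraMap (MvPolynomial (Fin m) K) (auxR m K))).height ≤ rs.length := by
  have h1 : ∀ r ∈ auxM m K, algebraMap _ (auxR m K) r ∈ maximalIdeal (auxR m K) := by
    intro r hr
    exact (IsLocalization.AtPrime.to_map_mem_maximal_iff (auxR m K) (auxM m K) r).2 hr
  have := aux_unmixed (R := auxR m K)
    ((List.ofFn (X : Fin m → MvPolynomial (Fin m) K)).map (algebraMap _ (auxR m K)))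
    (by
      intro r hr
      rw [List.mem_map] at hr
      obtain ⟨x, hx, rfl⟩ := hr
      apply h1
      rw [List.mem_ofFn] at hx
      obtain ⟨l, rfl⟩ := hx
      simp [RingHom.mem_ker])
    (aux_X_reg.of_isLocalization (auxR m K) (auxM m K).primeCompl)
    (by simpa using aux_dimR)
    (rs.map (algebraMap _ (auxR m K)))
    (by
      intro r hr
      rw [List.mem_map] at hr
      obtain ⟨x, hx, rfl⟩ := hr
      exact h1 _ (hm x hx)) hreg Q (by
        rw [Ideal.map_ofList] at hQ
        rwa [smul_eq_mul, Ideal.mul_top])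
  rw [List.length_map] at this
  have h2 := IsLocalization.height_under (auxM m K).primeCompl Q
  rw [← h2] at this
  exact this

lemma aux_span_homog {ι : Type*} (f : ι → MvPolynomial (Fin m) K)
    (h : ∀ i, ∃ d, f i ∈ homogeneousSubmodule (Fin m) K d) (s : Set ι) :
    (span (f '' s)).IsHomogeneous (homogeneousSubmodule (Fin m) K) := by
  apply Ideal.homogeneous_span
  rintro _ ⟨i, _, rfl⟩
  exact h i

lemma aux_homog_gens {I : Ideal (MvPolynomial (Fin m) K)}
    (hI : I.IsHomogeneous (homogeneousSubmodule (Fin m) K)) {k : ℕ} (g : Fin k → auxR m K)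
    (hg : I.map (algebraMap _ (auxR m K)) = span (Set.range g)) :
    ∃ (f : Fin k → MvPolynomial (Fin m) K) (d : Fin k → ℕ), Monotone d ∧
      (∀ i, f i ∈ homogeneousSubmodule (Fin m) K (d i)) ∧ I = span (Set.range f) := by
  set S : Set (MvPolynomial (Fin m) K) := {a | a ∈ I ∧ ∃ d, a ∈ homogeneousSubmodule (Fin m) K d}
    with hS
  have hIS : I = span S := by
    apply le_antisymm
    · intro x hx
      apply aux_mem_of_comp
      intro i
      exact subset_span ⟨aux_comp_mem hI hx i, i, homogeneousComponent_mem i x⟩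
    · exact span_le.2 fun x hx => hx.1
  obtain ⟨h, hh, heq⟩ := aux_select (algebraMap _ (auxR m K) '' S)
    (I.map (algebraMap _ (auxR m K))) k ⊥ g (by rw [bot_sup_eq, hg])
    (by rw [bot_sup_eq, ← Ideal.map_span, ← hIS])
  rw [bot_sup_eq] at heq
  have hch : ∀ i, ∃ a, (a ∈ I ∧ ∃ d, a ∈ homogeneousSubmodule (Fin m) K d) ∧
      algebraMap _ (auxR m K) a = h i := by
    intro i
    rcases hh i with h0 | ⟨a, ha, ha'⟩
    · exact ⟨0, ⟨I.zero_mem, 0, Submodule.zero_mem _⟩, by rw [h0, map_zero]⟩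
    · exact ⟨a, ha, ha'⟩
  choose f hf hfh using hch
  choose hfI d hd using hf
  have key : I = span (Set.range f) := by
    apply le_antisymm
    · have hhom : (span (Set.range f)).IsHomogeneous (homogeneousSubmodule (Fin m) K) := by
        rw [← Set.image_univ]
        exact aux_span_homog f (fun i => ⟨d i, hd i⟩) _
      conv_lhs => rw [hIS]
      rw [span_le]
      rintro a ⟨haI, e, hae⟩
      apply aux_descend hhom hae
      rw [Ideal.map_span, ← Set.range_comp]
      have : (algebraMap _ (auxR m K)) ∘ f = h := funext hfh
      rw [this, ← heq]
      exact Ideal.mem_map_of_mem _ haI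
    · rw [span_le]
      rintro _ ⟨i, rfl⟩
      exact hfI i
  refine ⟨f ∘ Tuple.sort d, d ∘ Tuple.sort d, Tuple.monotone_sort d, fun i => hd _, ?_⟩
  rw [(Tuple.sort d).surjective.range_comp]
  exact key

end PolyPart

section StepPart
open RingTheory.Sequence IsLocalRing MvPolynomial

variable {K : Type*} [Field K] {m : ℕ}

lemma aux_witness {k : ℕ} (g : Fin (k + 1) → MvPolynomial (Fin m) K) (d : Fin (k + 1) → ℕ)
    (hd : Monotone d) (hg : ∀ i, g i ∈ homogeneousSubmodule (Fin m) K (d i))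
    (T I N P : Ideal (MvPolynomial (Fin m) K)) (hI : I = span (Set.range g) ⊔ T)
    (hP : ¬ auxM m K ≤ P) [P.IsPrime] (hN : ∀ s a, s ∉ P → s * a ∈ N → a ∈ N) (hT : T ≤ N)
    (hIN : ¬ I ≤ N) :
    ∃ w ∈ (span (Set.range g)).restrictScalars K ⊓
      homogeneousSubmodule (Fin m) K (d (Fin.last k)), w ∉ N.restrictScalars K := by
  obtain ⟨l, hl⟩ := aux_exists_X hP
  obtain ⟨j, hj⟩ : ∃ j, g j ∉ N := by
    by_contra! hc
    apply hIN
    rw [hI]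
    exact sup_le (span_le.2 (by rintro _ ⟨j, rfl⟩; exact hc j)) hT
  refine ⟨X l ^ (d (Fin.last k) - d j) * g j, ⟨?_, ?_⟩, ?_⟩
  · exact Ideal.mul_mem_left _ _ (subset_span ⟨j, rfl⟩)
  · have h1 : (X l ^ (d (Fin.last k) - d j) : MvPolynomial (Fin m) K).IsHomogeneous
      (d (Fin.last k) - d j) := isHomogeneous_X_pow l _
    have h2 := h1.mul (hg j : (g j).IsHomogeneous (d j))
    rwa [Nat.sub_add_cancel (hd (Fin.le_last j))] at h2
  · intro h
    refine hj (hN _ _ ?_ h)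
    intro h'
    exact hl (IsPrime.mem_of_pow_mem ‹_› _ h')

lemma aux_height_ofList {A : Type*} [CommRing A] [IsNoetherianRing A] (T : List A) {P : Ideal A}
    (h : P ∈ (Ideal.ofList T).minimalPrimes) : P.height ≤ T.length := by
  classical
  have h2 : Ideal.ofList T = span (T.toFinset : Set A) := by
    rw [Ideal.ofList]; congr 1; ext; simp
  rw [h2] at h
  refine (Ideal.height_le_card_of_mem_minimalPrimes_span_finset h).trans ?_
  exact_mod_cast T.toFinset_card_le

lemma aux_le_ass {R : Type*} [CommRing R] [IsNoetherianRing R] {J Q : Ideal R}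
    (hQ : Q ∈ associatedPrimes R (R ⧸ J)) : J ≤ Q := by
  have hQ' : IsAssociatedPrime Q (R ⧸ J) := hQ
  rw [isAssociatedPrime_iff] at hQ'
  obtain ⟨_, y, rfl⟩ := hQ'
  intro t ht
  rw [Submodule.mem_colon_singleton]
  obtain ⟨y, rfl⟩ := Ideal.Quotient.mk_surjective y
  rw [Submodule.mem_bot, ← Ideal.Quotient.mk_eq_mk, ← Submodule.Quotient.mk_smul,
    Submodule.Quotient.mk_eq_zero]
  exact Ideal.mul_mem_right _ _ ht

lemma aux_step [Infinite K] {I : Ideal (MvPolynomial (Fin m) K)} (hIM : I ≤ auxM m K) {n : ℕ}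
    (hht : ∀ Q : Ideal (MvPolynomial (Fin m) K), Q.IsPrime → I ≤ Q → (n : ℕ∞) ≤ Q.height)
    {ι : Type*} [Finite ι] (P : ι → Ideal (MvPolynomial (Fin m) K)) [∀ i, (P i).IsPrime]
    (hPmin : ∀ i, P i ∈ I.minimalPrimes)
    (hPM : ∀ i, ¬ auxM m K ≤ P i)
    {k : ℕ} (g : Fin (k + 1) → MvPolynomial (Fin m) K) (d : Fin (k + 1) → ℕ)
    (hd : Monotone d) (hg : ∀ i, g i ∈ homogeneousSubmodule (Fin m) K (d i))
    (T : List (MvPolynomial (Fin m) K)) (hTI : ∀ t ∈ T, t ∈ I) (hTn : T.length < n)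
    (hgen : I = span (Set.range g) ⊔ Ideal.ofList T)
    (hreg : IsWeaklyRegular (auxR m K) (T.map (algebraMap _ (auxR m K)))) :
    ∃ x ∈ homogeneousSubmodule (Fin m) K (d (Fin.last k)), x ∈ I ∧
      IsWeaklyRegular (auxR m K) ((T ++ [x]).map (algebraMap _ (auxR m K))) ∧
      I = span (Set.range (g ∘ Fin.castSucc)) ⊔ Ideal.ofList (T ++ [x]) ∧
      ∀ i, algebraMap _ (Localization.AtPrime (P i)) x ∉
        (Ideal.ofList T).map (algebraMap _ (Localization.AtPrime (P i))) ⊔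
        maximalIdeal (Localization.AtPrime (P i)) *
          I.map (algebraMap _ (Localization.AtPrime (P i))) := by
  classical
  have hTle : Ideal.ofList T ≤ I := by
    rw [Ideal.ofList, span_le]; exact hTI
  set TR := (Ideal.ofList T).map (algebraMap _ (auxR m K)) with hTR
  let AS := associatedPrimes (auxR m K) (auxR m K ⧸ TR)
  have hASfin : Finite AS := (associatedPrimes.finite (auxR m K) (auxR m K ⧸ TR)).to_subtype
  set G := span (Set.range (g ∘ Fin.castSucc)) with hG
  let NP : ι → Ideal (MvPolynomial (Fin m) K) := fun i => Ideal.comap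
    (algebraMap _ (Localization.AtPrime (P i)))
    ((Ideal.ofList T).map (algebraMap _ (Localization.AtPrime (P i))) ⊔
        maximalIdeal (Localization.AtPrime (P i)) *
          I.map (algebraMap _ (Localization.AtPrime (P i))))
  let N : ι ⊕ AS ⊕ {_u : Unit // g (Fin.last k) ∉ G} → Ideal (MvPolynomial (Fin m) K)
    | .inl i => NP i
    | .inr (.inl Q) => Q.1.comap (algebraMap _ (auxR m K))
    | .inr (.inr _) => G
  obtain ⟨x, hxW, hxN⟩ := aux_avoid (K := K) ((span (Set.range g)).restrictScalars K ⊓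
      homogeneousSubmodule (Fin m) K (d (Fin.last k))) (fun i => (N i).restrictScalars K) (by
    rintro (i | Q | u)
    · refine aux_witness g d hd hg (Ideal.ofList T) I (NP i) (P i) hgen (hPM i) ?_ ?_ ?_
      · intro s a hs hsa
        simp only [NP, Ideal.mem_comap, map_mul] at hsa ⊢
        exact (Ideal.unit_mul_mem_iff_mem _
          (IsLocalization.map_units (Localization.AtPrime (P i))
            (⟨s, hs⟩ : (P i).primeCompl))).1 hsa
      · exact Ideal.map_le_iff_le_comap.1 le_sup_left
      · intro hle
        have h1 := aux_nakayama (Ideal.map_le_iff_le_comap.2 hle)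
        have h2 : P i ∈ (Ideal.ofList T).minimalPrimes := by
          refine ⟨⟨inferInstance, hTle.trans (hPmin i).1.2⟩, ?_⟩
          rintro q ⟨hq, hTq⟩ hqP
          refine (hPmin i).2 ⟨hq, ?_⟩ hqP
          intro a ha
          have h3 := h1 (Ideal.mem_map_of_mem _ ha)
          rw [IsLocalization.algebraMap_mem_map_algebraMap_iff (P i).primeCompl] at h3
          obtain ⟨s, hs, hsa⟩ := h3
          exact (hq.mem_or_mem (hTq hsa)).resolve_left fun h => hs (hqP h)
        have h3 := (hht (P i) inferInstance (hPmin i).1.2).trans (aux_height_ofList T h2)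
        exact absurd (by exact_mod_cast h3) (not_le.2 hTn)
    · have hQp : Q.1.IsPrime := IsAssociatedPrime.isPrime Q.2
      have hcp : (Q.1.comap (algebraMap (MvPolynomial (Fin m) K) (auxR m K))).IsPrime :=
        inferInstance
      have hnI : ¬ I ≤ Q.1.comap (algebraMap (MvPolynomial (Fin m) K) (auxR m K)) := by
        intro hle
        have h3 := (hht _ hcp hle).trans
          (aux_ass_height T (fun t ht => hIM (hTI t ht)) hreg Q.1 Q.2)
        exact absurd (by exact_mod_cast h3) (not_le.2 hTn)
      refine aux_witness g d hd hg (Ideal.ofList T) I _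
        (Q.1.comap (algebraMap (MvPolynomial (Fin m) K) (auxR m K))) hgen ?_ ?_ ?_ hnI
      · intro hle
        exact hnI (hIM.trans hle)
      · intro s a hs hsa
        exact (hcp.mem_or_mem hsa).resolve_left hs
      · exact Ideal.map_le_iff_le_comap.1 (aux_le_ass Q.2)
    · exact ⟨g (Fin.last k), ⟨subset_span ⟨_, rfl⟩, hg _⟩, u.2⟩)
  obtain ⟨hxg, hxd⟩ := hxW
  replace hxg : x ∈ span (Set.range g) := hxg
  have hxI : x ∈ I := by rw [hgen]; exact Ideal.mem_sup_left hxg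
  refine ⟨x, hxd, hxI, ?_, ?_, fun i => hxN (.inl i)⟩
  · rw [List.map_append, isWeaklyRegular_append_iff]
    refine ⟨hreg, ?_⟩
    rw [List.map_singleton, isWeaklyRegular_singleton_iff, smul_eq_mul, Ideal.mul_top,
      ← Ideal.map_ofList]
    by_contra hc
    have h1 : algebraMap _ (auxR m K) x ∈ ⋃ p ∈ associatedPrimes (auxR m K) (auxR m K ⧸ TR),
        (p : Set (auxR m K)) := by
      rw [biUnion_associatedPrimes_eq_compl_regular]
      exact hc
    simp only [Set.mem_iUnion] at h1
    obtain ⟨Q, hQ, hxQ⟩ := h1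
    exact hxN (.inr (.inl ⟨Q, hQ⟩)) hxQ
  · have hGI : G ≤ span (Set.range g) :=
      span_mono (by rintro _ ⟨j, rfl⟩; exact ⟨_, rfl⟩)
    rw [Ideal.ofList_append, Ideal.ofList_singleton]
    apply le_antisymm
    · have hlast : g (Fin.last k) ∈ G ⊔ span {x} := by
        by_cases hl : g (Fin.last k) ∈ G
        · exact Ideal.mem_sup_left hl
        have hxG : x ∉ G := hxN (.inr (.inr ⟨(), hl⟩))
        have hGh : G.IsHomogeneous (homogeneousSubmodule (Fin m) K) := by
          rw [hG, ← Set.image_univ]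
          exact aux_span_homog _ (fun i => ⟨_, hg _⟩) _
        obtain ⟨c, hc⟩ := (Ideal.mem_span_range_iff_exists_fun).1 hxg
        rw [Fin.sum_univ_castSucc] at hc
        set y := ∑ i : Fin k, c i.castSucc * g i.castSucc with hy
        have hyG : y ∈ G := Ideal.sum_mem _ fun i _ =>
          Ideal.mul_mem_left _ _ (subset_span ⟨i, rfl⟩)
        have h2 := aux_comp_mem hGh hyG (0 + d (Fin.last k))
        have h3 : homogeneousComponent (0 + d (Fin.last k)) x = x := by
          rw [zero_add, homogeneousComponent_of_mem hxd, if_pos rfl]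
        rw [← hc, map_add, aux_comp_mul (hg _), hc, homogeneousComponent_zero] at h3
        have hc0 : coeff 0 (c (Fin.last k)) ≠ 0 := by
          intro h0
          rw [h0, map_zero, zero_mul, add_zero] at h3
          exact hxG (h3 ▸ h2)
        have hu : IsUnit (C (coeff 0 (c (Fin.last k))) : MvPolynomial (Fin m) K) :=
          (IsUnit.mk0 _ hc0).map C
        rw [← Ideal.unit_mul_mem_iff_mem _ hu, eq_sub_iff_add_eq'.2 h3]
        exact Ideal.sub_mem _ (Ideal.mem_sup_right (subset_span rfl)) (Ideal.mem_sup_left h2)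
      conv_lhs => rw [hgen]
      refine sup_le (span_le.2 ?_) (le_sup_left.trans le_sup_right)
      rintro _ ⟨j, rfl⟩
      refine Fin.lastCases ?_ (fun j => ?_) j
      · exact (sup_le_sup_left le_sup_right _ : G ⊔ span {x} ≤ _) hlast
      · exact Ideal.mem_sup_left (subset_span ⟨j, rfl⟩)
    · refine sup_le (hGI.trans (hgen ▸ le_sup_left)) (sup_le hTle ?_)
      rw [span_le, Set.singleton_subset_iff]
      exact hxI

end StepPart

section FinalPart
open RingTheory.Sequence IsLocalRing MvPolynomial

lemma aux_induct {K : Type*} [Field K] {m : ℕ}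
    [Infinite K] {I : Ideal (MvPolynomial (Fin m) K)} (hIM : I ≤ auxM m K) {n : ℕ}
    (hht : ∀ Q : Ideal (MvPolynomial (Fin m) K), Q.IsPrime → I ≤ Q → (n : ℕ∞) ≤ Q.height)
    {ι : Type*} [Finite ι] (P : ι → Ideal (MvPolynomial (Fin m) K)) [∀ i, (P i).IsPrime]
    (hPmin : ∀ i, P i ∈ I.minimalPrimes)
    (hPM : ∀ i, ¬ auxM m K ≤ P i) (r : ℕ) :
    ∀ (g : Fin (r + 1) → MvPolynomial (Fin m) K) (d : Fin (r + 1) → ℕ)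
    (_ : Monotone d) (_ : ∀ i, g i ∈ homogeneousSubmodule (Fin m) K (d i))
    (T : List (MvPolynomial (Fin m) K)) (_ : ∀ t ∈ T, t ∈ I) (_ : T.length + r = n)
    (_ : ∀ t ∈ T, ∃ d, t ∈ homogeneousSubmodule (Fin m) K d)
    (_ : I = span (Set.range g) ⊔ Ideal.ofList T)
    (_ : IsWeaklyRegular (auxR m K) (T.map (algebraMap _ (auxR m K))))
    (_ : ∀ i, ∃ S : Fin r → Localization.AtPrime (P i),
      I.map (algebraMap _ (Localization.AtPrime (P i))) =
      (Ideal.ofList T).map (algebraMap _ (Localization.AtPrime (P i))) ⊔ span (Set.range S)),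
    ∃ (T' : List (MvPolynomial (Fin m) K)) (g0 : MvPolynomial (Fin m) K), T'.length = n ∧
      (∀ t ∈ T', ∃ d, t ∈ homogeneousSubmodule (Fin m) K d) ∧
      (∃ d, g0 ∈ homogeneousSubmodule (Fin m) K d) ∧
      I = span {g0} ⊔ Ideal.ofList T' ∧
      IsWeaklyRegular (auxR m K) (T'.map (algebraMap _ (auxR m K))) ∧
      ∀ i, I.map (algebraMap _ (Localization.AtPrime (P i))) =
        (Ideal.ofList T').map (algebraMap _ (Localization.AtPrime (P i))) := by
  induction r with
  | zero =>
    intro g d hd hg T hTI hlen hTh hgen hreg hloc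
    refine ⟨T, g 0, by simpa using hlen, hTh, ⟨_, hg 0⟩, ?_, hreg, ?_⟩
    · have hr : Set.range g = {g 0} := by
        ext y
        constructor
        · rintro ⟨j, rfl⟩
          rw [Subsingleton.elim (α := Fin 1) j 0]
          rfl
        · rintro rfl
          exact ⟨0, rfl⟩
      rw [← hr]
      exact hgen
    · intro i
      obtain ⟨S, hS⟩ := hloc i
      simpa using hS
  | succ r ih =>
    intro g d hd hg T hTI hlen hTh hgen hreg hloc
    obtain ⟨x, hxd, hxI, hxreg, hxgen, hxP⟩ :=
      aux_step hIM hht P hPmin hPM g d hd hg T hTI (by omega) hgen hreg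
    refine ih (g ∘ Fin.castSucc) (d ∘ Fin.castSucc) (fun a b h => hd (by simpa using h))
      (fun i => hg _) (T ++ [x]) ?_ (by simp; omega) ?_ hxgen hxreg ?_
    · intro t ht
      simp only [List.mem_append, List.mem_singleton] at ht
      rcases ht with ht | rfl
      · exact hTI t ht
      · exact hxI
    · intro t ht
      simp only [List.mem_append, List.mem_singleton] at ht
      rcases ht with ht | rfl
      · exact hTh t ht
      · exact ⟨_, hxd⟩
    · intro i
      obtain ⟨S, hS⟩ := hloc i
      obtain ⟨S', hS'⟩ := aux_steinitz _ S _ hS (Ideal.mem_map_of_mem _ hxI) (hxP i)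
      refine ⟨S', ?_⟩
      rw [Ideal.ofList_append, Ideal.ofList_singleton, Ideal.map_sup,
        Ideal.map_span _ {x}, Set.image_singleton]
      exact hS'

lemma aux_span_take {A : Type*} [CommRing A] {N : ℕ} (l : List A) (f : Fin N → A)
    (hN : N ≤ l.length) (hf : ∀ j : Fin N, f j = l[j.1]'(j.2.trans_le hN)) (i : Fin N) :
    span (f '' {j | j < i}) = Ideal.ofList (l.take i) := by
  rw [Ideal.ofList]
  congr 1
  ext y
  simp only [Set.mem_ofPred_eq, List.mem_take_iff_getElem, Set.mem_image]
  constructor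
  · rintro ⟨j, hj, rfl⟩
    exact ⟨j, by rw [lt_min_iff]; exact ⟨hj, j.2.trans_le hN⟩, (hf j).symm⟩
  · rintro ⟨j, hj, rfl⟩
    rw [lt_min_iff] at hj
    exact ⟨⟨j, hj.1.trans i.2⟩, hj.1, hf _⟩

lemma aux_ofList_homog {K : Type*} [Field K] {m : ℕ} (T : List (MvPolynomial (Fin m) K))
    (h : ∀ t ∈ T, ∃ d, t ∈ homogeneousSubmodule (Fin m) K d) :
    (Ideal.ofList T).IsHomogeneous (homogeneousSubmodule (Fin m) K) := by
  apply Ideal.homogeneous_span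
  intro t ht
  exact h t ht

lemma aux_reg_descend {K : Type*} [Field K] {m : ℕ} (T : List (MvPolynomial (Fin m) K))
    (h : ∀ t ∈ T, ∃ d, t ∈ homogeneousSubmodule (Fin m) K d)
    (hreg : IsWeaklyRegular (auxR m K) (T.map (algebraMap _ (auxR m K))))
    (i : ℕ) (hi : i < T.length) (a : MvPolynomial (Fin m) K)
    (ha : a * T[i] ∈ Ideal.ofList (T.take i)) : a ∈ Ideal.ofList (T.take i) := by
  have hJ : (Ideal.ofList (T.take i)).IsHomogeneous (homogeneousSubmodule (Fin m) K) :=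
    aux_ofList_homog _ fun t ht => h t (List.mem_of_mem_take ht)
  obtain ⟨d, hd⟩ := h T[i] (List.getElem_mem hi)
  apply aux_mem_of_comp
  intro j
  have h1 := aux_comp_mem hJ ha (j + d)
  rw [aux_comp_mul hd] at h1
  apply aux_descend hJ (homogeneousComponent_mem j a)
  rw [isWeaklyRegular_iff] at hreg
  have h2 := hreg i (by simpa using hi)
  rw [isSMulRegular_iff_right_eq_zero_of_smul, ← List.map_take, ← Ideal.map_ofList, smul_eq_mul,
    Ideal.mul_top] at h2
  have h3 := h2 (Submodule.Quotient.mk (algebraMap _ (auxR m K) (homogeneousComponent j a))) (by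
    rw [← Submodule.Quotient.mk_smul, Submodule.Quotient.mk_eq_zero, List.getElem_map, smul_eq_mul,
      mul_comm, ← map_mul]
    exact Ideal.mem_map_of_mem _ h1)
  rwa [Submodule.Quotient.mk_eq_zero] at h3

lemma aux_last {K : Type*} [Field K] {m : ℕ} {I : Ideal (MvPolynomial (Fin m) K)}
    (hIM : I ≤ auxM m K) {ι : Type*} (P : ι → Ideal (MvPolynomial (Fin m) K))
    [∀ i, (P i).IsPrime]
    (T : List (MvPolynomial (Fin m) K)) (g0 : MvPolynomial (Fin m) K)
    (hP : ∀ Q : Ideal (MvPolynomial (Fin m) K), Q.IsPrime → I ≤ Q → Q.height ≤ T.length →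
      ∃ i, P i = Q)
    (hI : I.IsHomogeneous (homogeneousSubmodule (Fin m) K))
    (hT : ∀ t ∈ T, ∃ d, t ∈ homogeneousSubmodule (Fin m) K d)
    (hg0 : ∃ d, g0 ∈ homogeneousSubmodule (Fin m) K d)
    (hgen : I = span {g0} ⊔ Ideal.ofList T)
    (hreg : IsWeaklyRegular (auxR m K) (T.map (algebraMap _ (auxR m K))))
    (hloc : ∀ i, I.map (algebraMap _ (Localization.AtPrime (P i))) =
        (Ideal.ofList T).map (algebraMap _ (Localization.AtPrime (P i))))
    (a : MvPolynomial (Fin m) K) (haI : a ∈ I) (ha : a * g0 ∈ Ideal.ofList T) :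
    a ∈ Ideal.ofList T := by
  have hJ := aux_ofList_homog T hT
  obtain ⟨d, hd⟩ := hg0
  have hTI : Ideal.ofList T ≤ I := hgen ▸ le_sup_right
  apply aux_mem_of_comp
  intro j
  have h1 := aux_comp_mem hJ ha (j + d)
  rw [aux_comp_mul hd] at h1
  have hbI := aux_comp_mem hI haI j
  apply aux_descend hJ (homogeneousComponent_mem j a)
  set b := homogeneousComponent j a
  by_contra hc
  set TR := (Ideal.ofList T).map (algebraMap _ (auxR m K)) with hTR
  obtain ⟨Q, hQ, hle⟩ := exists_le_isAssociatedPrime_of_isNoetherianRing (auxR m K)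
    (Submodule.Quotient.mk (algebraMap _ (auxR m K) b) : auxR m K ⧸ TR)
    (by rwa [Ne, Submodule.Quotient.mk_eq_zero])
  have hQp : Q.IsPrime := IsAssociatedPrime.isPrime hQ
  have hann : ∀ s : MvPolynomial (Fin m) K, s * b ∈ Ideal.ofList T →
      s ∈ Q.comap (algebraMap _ (auxR m K)) := by
    intro s hs
    apply hle
    rw [Submodule.mem_colon_singleton, Submodule.mem_bot, ← Submodule.Quotient.mk_smul,
      Submodule.Quotient.mk_eq_zero, smul_eq_mul, ← map_mul]
    exact Ideal.mem_map_of_mem _ hs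
  have hIQ : I ≤ Q.comap (algebraMap _ (auxR m K)) := by
    rw [hgen]
    refine sup_le ?_ ?_
    · rw [span_le, Set.singleton_subset_iff]
      exact hann _ (by rwa [mul_comm])
    · exact Ideal.map_le_iff_le_comap.1 (aux_le_ass hQ)
  obtain ⟨i, hi⟩ := hP _ inferInstance hIQ
    (aux_ass_height T (fun t ht => hIM (hTI (subset_span ht))) hreg Q hQ)
  have h3 := Ideal.mem_map_of_mem (algebraMap _ (Localization.AtPrime (P i))) hbI
  rw [hloc i, IsLocalization.algebraMap_mem_map_algebraMap_iff (P i).primeCompl] at h3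
  obtain ⟨s, hs, hsb⟩ := h3
  exact hs (hi ▸ hann s hsb)

end FinalPart

section MainPart
open RingTheory.Sequence IsLocalRing MvPolynomial

lemma aux_minGens_le {A : Type*} [CommRing A] {I : Ideal A} {k : ℕ} (g : Fin k → A)
    (h : I = span (Set.range g)) : minGens I ≤ k := Nat.sInf_le ⟨g, h⟩

lemma aux_minGens_spec {A : Type*} [CommRing A] [IsNoetherianRing A] (I : Ideal A) :
    ∃ g : Fin (minGens I) → A, I = span (Set.range g) := by
  have hne : {k : ℕ | ∃ g : Fin k → A, I = Ideal.span (Set.range g)}.Nonempty := by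
    obtain ⟨k, g, hg⟩ := Submodule.fg_iff_exists_fin_generating_family.1
      (IsNoetherian.noetherian I)
    exact ⟨k, g, hg.symm⟩
  exact Nat.sInf_mem hne

lemma aux_regseq_len {L : Type*} [CommRing L] [IsLocalRing L] [IsNoetherianRing L] {k : ℕ}
    (g : Fin k → L) (hg : IsRegSeq g) : (k : WithBot ℕ∞) ≤ ringKrullDim L := by
  have := aux_len (List.ofFn g) (by
    intro r hr
    rw [List.mem_ofFn] at hr
    obtain ⟨i, rfl⟩ := hr
    exact IsLocalRing.le_maximalIdeal hg.2 (subset_span ⟨i, rfl⟩)) (by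
    rw [isWeaklyRegular_iff]
    intro i hi
    have hi' : i < k := by simpa using hi
    have h1 := aux_span_take (List.ofFn g) g (by simp) (fun j => by simp) ⟨i, hi'⟩
    rw [isSMulRegular_iff_right_eq_zero_of_smul, smul_eq_mul, Ideal.mul_top, ← h1]
    intro y hy
    obtain ⟨y, rfl⟩ := Submodule.Quotient.mk_surjective _ y
    rw [← Submodule.Quotient.mk_smul, Submodule.Quotient.mk_eq_zero] at hy
    rw [Submodule.Quotient.mk_eq_zero]
    apply hg.1 ⟨i, hi'⟩
    rw [smul_eq_mul, mul_comm] at hy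
    simpa using hy)
  simpa using this

lemma aux_pad {L : Type*} [CommRing L] {k n : ℕ} (hkn : k ≤ n) (g : Fin k → L) :
    ∃ S : Fin n → L, span (Set.range S) = span (Set.range g) := by
  refine ⟨fun i => if h : i.1 < k then g ⟨i.1, h⟩ else 0, le_antisymm ?_ ?_⟩
  · rw [span_le]
    rintro _ ⟨i, rfl⟩
    dsimp only
    split_ifs with h
    · exact subset_span ⟨_, rfl⟩
    · exact Ideal.zero_mem _
  · rw [span_le]
    rintro _ ⟨i, rfl⟩
    exact subset_span ⟨⟨i.1, i.2.trans_le hkn⟩, by simp⟩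

end MainPart

/-- Proposition 1.4: a homogeneous almost complete intersection ideal of height `n` in a
polynomial ring over an infinite field is generated by a homogeneous d-sequence
`f_1, …, f_{n+1}` such that `f_1, …, f_n` is a regular sequence. -/
theorem aci_generated_by_dSequence (K : Type) [Field K] [Infinite K] (m n : ℕ)
    (I : Ideal (MvPolynomial (Fin m) K))
    (hhom : Ideal.IsHomogeneous (MvPolynomial.homogeneousSubmodule (Fin m) K) I)
    (hACI : IsACI I) (hI : I ≠ ⊤)
    (hht : idealHeight I = (n : ℕ∞)) :
    ∃ f : Fin (n + 1) → MvPolynomial (Fin m) K,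
      (∀ i, ∃ di : ℕ, f i ∈ MvPolynomial.homogeneousSubmodule (Fin m) K di) ∧
      I = Ideal.span (Set.range f) ∧
      IsDSequence f ∧
      IsRegSeq (f ∘ Fin.castSucc) := by
  classical
  obtain ⟨hmu, hci⟩ := hACI
  rw [hht] at hmu
  have hmu' : minGens I = n + 1 := by exact_mod_cast hmu
  have hIM : I ≤ auxM m K := aux_le_M hhom hI
  have hht' : ∀ Q : Ideal (MvPolynomial (Fin m) K), Q.IsPrime → I ≤ Q → (n : ℕ∞) ≤ Q.height := by
    intro Q hQ hle
    rw [← hht, idealHeight]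
    refine (iInf₂_le (⟨Q, hQ⟩ : PrimeSpectrum _) hle).trans ?_
    exact (PrimeSpectrum.height_eq_orderHeight (⟨Q, hQ⟩ : PrimeSpectrum _)).ge
  have hmin : ∀ Q : Ideal (MvPolynomial (Fin m) K), Q.IsPrime → I ≤ Q → Q.height ≤ n →
      Q ∈ I.minimalPrimes ∧ Q.height = n := by
    intro Q hQ hle hh
    refine ⟨?_, le_antisymm hh (hht' Q hQ hle)⟩
    obtain ⟨p, hp, hpQ⟩ := Ideal.exists_minimalPrimes_le hle
    rcases eq_or_lt_of_le hpQ with h | h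
    · exact h ▸ hp
    · have := hp.1.1
      have h1 := Ideal.height_strict_mono_of_isPrime_of_isPrime h
      exact absurd (h1.trans_le hh) (not_lt.2 (hht' p hp.1.1 hp.1.2))
  let ι := {P : Ideal (MvPolynomial (Fin m) K) // P ∈ I.minimalPrimes ∧ P.height = n}
  have hfin : Finite ι :=
    ((Ideal.finite_minimalPrimes_of_isNoetherianRing _ I).subset
      (fun P (hP : P ∈ {P | P ∈ I.minimalPrimes ∧ P.height = n}) => hP.1)).to_subtype
  let P : ι → Ideal (MvPolynomial (Fin m) K) := Subtype.val
  have hPp : ∀ i, (P i).IsPrime := fun i => i.2.1.1.1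
  have hloc : ∀ i, ∃ S : Fin n → Localization.AtPrime (P i),
      I.map (algebraMap _ (Localization.AtPrime (P i))) = span (Set.range S) := by
    intro i
    obtain ⟨k, g, hg, hgr⟩ := hci (P i) i.2.1 (hPp i)
    have hk := aux_regseq_len g hgr
    rw [IsLocalization.AtPrime.ringKrullDim_eq_height (P i), i.2.2] at hk
    obtain ⟨S, hS⟩ := aux_pad (by exact_mod_cast hk : k ≤ n) g
    exact ⟨S, hg.trans hS.symm⟩
  have hPM : ∀ i, ¬ auxM m K ≤ P i := by
    intro i hle
    have hmax : (auxM m K).IsMaximal :=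
      RingHom.ker_isMaximal_of_surjective _ (fun c => ⟨MvPolynomial.C c, by simp⟩)
    have heq : auxM m K = P i := hmax.eq_of_le (hPp i).ne_top hle
    have hall : ∀ Q : Ideal (MvPolynomial (Fin m) K), Q = auxM m K → ∀ hQ : Q.IsPrime,
        (∃ S : Fin n → Localization.AtPrime Q,
        I.map (algebraMap _ (Localization.AtPrime Q)) = span (Set.range S)) →
        minGens I ≤ n := by
      rintro Q rfl hQ ⟨S, hS⟩
      obtain ⟨f, d, _, _, hf⟩ := aux_homog_gens hhom S hS
      exact aux_minGens_le f hf
    have := hall (P i) heq.symm (hPp i) (hloc i)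
    omega
  have hGex : ∃ g : Fin (n + 1) → MvPolynomial (Fin m) K, I = span (Set.range g) :=
    hmu' ▸ aux_minGens_spec I
  obtain ⟨G, hG⟩ := hGex
  obtain ⟨g, d, hd, hg, hgI⟩ := aux_homog_gens hhom (algebraMap _ (auxR m K) ∘ G)
    (by rw [Set.range_comp, ← Ideal.map_span, ← hG])
  obtain ⟨T, g0, hlen, hTh, hg0, hgen, hreg, hTloc⟩ := aux_induct hIM hht' P (fun i => i.2.1) hPM n
    g d hd hg [] (by simp) (by simp) (by simp) (by simpa using hgI) (by simp) (by
      intro i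
      obtain ⟨S, hS⟩ := hloc i
      exact ⟨S, by simpa using hS⟩)
  subst hlen
  have hTI : Ideal.ofList T ≤ I := hgen ▸ le_sup_right
  let f : Fin (T.length + 1) → MvPolynomial (Fin m) K := fun i => (T ++ [g0])[i.1]'(by simp; omega)
  have hspan : ∀ i : Fin (T.length + 1),
      span (f '' {j | j < i}) = Ideal.ofList (T.take i) := by
    intro i
    rw [aux_span_take (T ++ [g0]) f (by simp) (fun j => rfl) i,
      List.take_append_of_le_length (Nat.lt_succ_iff.1 i.2)]
  have hspan' : ∀ i : Fin T.length,
      span ((f ∘ Fin.castSucc) '' {j | j < i}) = Ideal.ofList (T.take i) := by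
    intro i
    exact aux_span_take T _ le_rfl (fun j => by simp [f, List.getElem_append_left]) i
  have hfI : I = span (Set.range f) := by
    rw [hgen, ← Ideal.ofList_singleton, sup_comm, ← Ideal.ofList_append, Ideal.ofList]
    congr 1
    ext y
    simp only [Set.mem_ofPred_eq, List.mem_iff_getElem, Set.mem_range, f]
    constructor
    · rintro ⟨j, hj, rfl⟩
      exact ⟨⟨j, by simpa using hj⟩, rfl⟩
    · rintro ⟨j, rfl⟩
      exact ⟨j, by simp; omega, rfl⟩
  have hfl : ∀ i (hi : i < T.length), f ⟨i, by omega⟩ = T[i] := by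
    intro i hi
    simp [f, List.getElem_append_left, hi]
  refine ⟨f, ?_, hfI, ?_, ?_, ?_⟩
  · intro i
    have : f i ∈ T ++ [g0] := List.getElem_mem _
    rw [List.mem_append, List.mem_singleton] at this
    rcases this with h | h
    · exact hTh _ h
    · exact h ▸ hg0
  · intro i
    rw [hspan, ← hfI]
    apply le_antisymm
    · rintro a ⟨ha, haI⟩
      have ha' : a * f i ∈ Ideal.ofList (T.take i) :=
        Submodule.mem_colon.1 ha (f i) (subset_span rfl)
      rcases Nat.lt_succ_iff_lt_or_eq.1 i.2 with hi | hi
      · have h1 : f i = T[i.1] := hfl i.1 hi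
        rw [h1] at ha'
        exact aux_reg_descend T hTh hreg i.1 hi a ha'
      · have h1 : f i = g0 := by simp [f, hi]
        rw [h1, hi, List.take_length] at ha'
        rw [hi, List.take_length]
        exact aux_last hIM P T g0 (fun Q hQ hle hh => ⟨⟨Q, hmin Q hQ hle hh⟩, rfl⟩) hhom hTh hg0
          hgen hreg hTloc a haI ha'
    · refine le_inf ?_ ?_
      · intro a ha
        rw [Submodule.mem_colon]
        intro p _
        exact Ideal.mul_mem_right _ _ ha
      · refine le_trans (span_mono ?_) hTI
        intro t ht
        exact List.mem_of_mem_take ht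
  · intro i a ha
    rw [hspan'] at ha ⊢
    have h1 : (f ∘ Fin.castSucc) i = T[i.1] := hfl i.1 i.2
    rw [h1] at ha
    exact aux_reg_descend T hTh hreg i.1 i.2 a ha
  · intro h
    apply hI
    rw [eq_top_iff, ← h, hfI]
    exact span_mono (Set.range_comp_subset_range _ _)
end
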